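/- For n ≥ 5, any complex representation of SL_n(ℤ) of dimension less than 2^n − 2 extends to an algebraic representation of SL_n(ℂ). -/

import Mathlib

open Matrix

/-- A representation of `SL_n(ℂ)` is algebraic (rational) if each matrix entry of `ρ(g)`
is a polynomial function of the matrix entries of `g`. -/
def IsAlgebraicSL {n N : ℕ}
    (ρ : Matrix.SpecialLinearGroup (Fin n) ℂ →* GL (Fin N) ℂ) : Prop :=
  ∀ i j : Fin N, ∃ P : MvPolynomial (Fin n × Fin n) ℂ,
    ∀ g : Matrix.SpecialLinearGroup (Fin n) ℂ,
      (ρ g : Matrix (Fin N) (Fin N) ℂ) i j =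
        MvPolynomial.eval (fun q => (g : Matrix (Fin n) (Fin n) ℂ) q.1 q.2) P

set_option linter.all false

namespace SLX

/-- elementary matrix in SL -/
def el {n : ℕ} {R : Type*} [CommRing R] (i j : Fin n) (t : R) :
    Matrix.SpecialLinearGroup (Fin n) R :=
  if h : i ≠ j then Matrix.SpecialLinearGroup.transvection h t else 1

section el
variable {n : ℕ} {R : Type*} [CommRing R]

lemma el_coe {i j : Fin n} (h : i ≠ j) (t : R) :
    ((el i j t : Matrix.SpecialLinearGroup (Fin n) R) : Matrix (Fin n) (Fin n) R)
      = 1 + Matrix.single i j t := by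
  simp [el, h, Matrix.SpecialLinearGroup.transvection_coe]

lemma el_mul_apply {i j : Fin n} (h : i ≠ j) (t : R)
    (g : Matrix.SpecialLinearGroup (Fin n) R) (k l : Fin n) :
    (el i j t * g) k l = g k l + if k = i then t * g j l else 0 := by
  rw [Matrix.SpecialLinearGroup.coe_mul, el_coe h, add_mul, one_mul, Matrix.add_apply]
  congr 1
  split_ifs with hk
  · subst hk; simp
  · rw [Matrix.single_mul_apply_of_ne _ _ _ _ _ hk]

lemma el_zero (i j : Fin n) : (el i j (0 : R)) = 1 := by
  unfold el; split_ifs <;> simp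

lemma el_add (i j : Fin n) (s t : R) : el i j (s + t) = el i j s * el i j t := by
  unfold el; split_ifs
  · exact Matrix.SpecialLinearGroup.transvection_add _ _ _
  · simp

lemma el_inv (i j : Fin n) (t : R) : (el i j t)⁻¹ = el i j (-t) := by
  rw [inv_eq_iff_mul_eq_one, ← el_add, add_neg_cancel, el_zero]

lemma el_map {S : Type*} [CommRing S] (f : R →+* S) (i j : Fin n) (t : R) :
    Matrix.SpecialLinearGroup.map f (el i j t) = el i j (f t) := by
  by_cases h : i = j
  · simp [el, h]
  · ext k l
    rw [Matrix.SpecialLinearGroup.map_apply_coe, el_coe h, el_coe h]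
    simp [Matrix.single_apply, Matrix.one_apply, apply_ite f]

/-- first `c` columns are those of the identity -/
def FC (c : ℕ) (g : Matrix.SpecialLinearGroup (Fin n) R) : Prop :=
  ∀ k l : Fin n, (l : ℕ) < c → g k l = if k = l then 1 else 0

lemma FC_el {c : ℕ} {g : Matrix.SpecialLinearGroup (Fin n) R} (hg : FC c g) {i j : Fin n}
    (h : i ≠ j) (hj : c ≤ (j : ℕ)) (t : R) : FC c (el i j t * g) := by
  intro k l hl
  rw [el_mul_apply h, hg k l hl, hg j l hl]
  have : j ≠ l := by rintro rfl; omega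
  simp [this]

lemma FC_inv {c : ℕ} {g : Matrix.SpecialLinearGroup (Fin n) R} (hg : FC c g) : FC c g⁻¹ := by
  intro k l hl
  have h1 : (g⁻¹ * g) k l = (1 : Matrix (Fin n) (Fin n) R) k l := by simp
  rw [Matrix.SpecialLinearGroup.coe_mul, Matrix.mul_apply] at h1
  simp only [hg _ l hl] at h1
  simpa [Matrix.one_apply] using h1

lemma FC_unit {g : Matrix.SpecialLinearGroup (Fin n) R} {c : Fin n} (hg : FC (c : ℕ) g)
    (hz : ∀ i, c < i → g i c = 0) : (g⁻¹ : Matrix.SpecialLinearGroup (Fin n) R) c c * g c c = 1 := by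
  have h1 : (g⁻¹ * g) c c = (1 : Matrix (Fin n) (Fin n) R) c c := by simp
  rw [Matrix.SpecialLinearGroup.coe_mul, Matrix.mul_apply, Finset.sum_eq_single c] at h1
  · simpa using h1
  · intro b _ hb
    rcases lt_or_gt_of_ne hb with h | h
    · rw [FC_inv hg c b h, if_neg hb.symm, zero_mul]
    · rw [hz b h, mul_zero]
  · simp

lemma FC_last {g : Matrix.SpecialLinearGroup (Fin n) R} {c : Fin n} (hg : FC (c : ℕ) g)
    (hc : (c : ℕ) + 1 = n) : g c c = 1 := by
  have hdet := g.det_coe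
  rw [Matrix.det_of_isUpperTriangular, Finset.prod_eq_single c] at hdet
  · exact hdet
  · intro b _ hb
    have : (b : ℕ) < c := by have := b.2; have : (b : ℕ) ≠ c := fun h => hb (Fin.ext h); omega
    rw [hg b b this, if_pos rfl]
  · simp
  · intro i j hij
    simp only [id] at hij
    rw [hg i j (by have := i.2; have : (j : ℕ) < i := hij; omega), if_neg hij.ne']

lemma FC_clear (H : Subgroup (Matrix.SpecialLinearGroup (Fin n) R)) {c : Fin n}
    (S : Finset (Fin n)) (hS : c ∉ S)
    {g : Matrix.SpecialLinearGroup (Fin n) R} (hg : FC (c : ℕ) g) (h1 : g c c = 1)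
    (hH : ∀ k ≠ c, el k c (-g k c) ∈ H) :
    ∃ h ∈ H, FC (c : ℕ) (h * g) ∧ (∀ k ∈ S, (h * g) k c = 0) ∧
      ∀ k ∉ S, (h * g) k c = g k c := by
  induction S using Finset.induction_on with
  | empty => exact ⟨1, H.one_mem, by simpa using hg, by simp, by simp⟩
  | insert a S ha ih =>
    have hac : a ≠ c := by rintro rfl; simp at hS
    obtain ⟨h, hh, hF, hz, hn⟩ := ih (fun h => hS (Finset.mem_insert_of_mem h))
    have hcS : c ∉ S := fun h => hS (Finset.mem_insert_of_mem h)
    refine ⟨el a c (-g a c) * h, H.mul_mem (hH a hac) hh, ?_, ?_, ?_⟩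
    · rw [mul_assoc]; exact FC_el hF hac le_rfl _
    · intro k hk
      rw [mul_assoc, el_mul_apply hac, hn c hcS, h1]
      rcases Finset.mem_insert.1 hk with rfl | hk
      · rw [hn k ha]; simp
      · have : k ≠ a := fun h => ha (h ▸ hk)
        rw [hz k hk]; simp [this]
    · intro k hk
      rw [mul_assoc, el_mul_apply hac]
      have : k ≠ a := by rintro rfl; simp at hk
      rw [hn k (fun h => hk (Finset.mem_insert_of_mem h))]; simp [this]

lemma FC_step (H : Subgroup (Matrix.SpecialLinearGroup (Fin n) R)) {c : Fin n}
    {g : Matrix.SpecialLinearGroup (Fin n) R} (hg : FC (c : ℕ) g) (h1 : g c c = 1)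
    (hH : ∀ k ≠ c, el k c (-g k c) ∈ H) :
    ∃ h ∈ H, FC ((c : ℕ) + 1) (h * g) := by
  obtain ⟨h, hh, hF, hz, hn⟩ := FC_clear H (Finset.univ.erase c) (by simp) hg h1 hH
  refine ⟨h, hh, fun k l hl => ?_⟩
  rcases Nat.lt_succ_iff_lt_or_eq.1 hl with hl | hl
  · exact hF k l hl
  · have : l = c := Fin.ext hl
    subst this
    by_cases hk : k = l
    · subst hk; rw [hn k (by simp), h1]; simp
    · rw [hz k (by simp [hk])]; simp [hk]

lemma FC_top {g : Matrix.SpecialLinearGroup (Fin n) R} {c : ℕ} (hc : n ≤ c) (hg : FC c g) : g = 1 := by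
  ext k l
  rw [hg k l (by omega)]; simp [Matrix.one_apply]

end el

/-- I1 -/
lemma field_gen {n : ℕ} {K : Type*} [Field K] (c0 : ℕ)
    (H : Subgroup (Matrix.SpecialLinearGroup (Fin n) K))
    (hH : ∀ (k l : Fin n) (t : K), k ≠ l → c0 ≤ (l : ℕ) → el k l t ∈ H) :
    ∀ (d c : ℕ), c0 ≤ c → n ≤ c + d → ∀ g, FC c g → g ∈ H := by
  intro d
  induction d with
  | zero =>
    intro c _ hn g hg
    rw [FC_top (by omega) hg]; exact H.one_mem
  | succ d ih =>
    intro c hc0 hn g hg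
    by_cases hcn : n ≤ c
    · rw [FC_top hcn hg]; exact H.one_mem
    push Not at hcn
    lift c to Fin n using hcn
    -- reduce to entry one
    have main : ∀ g, FC (c : ℕ) g → g c c = 1 → g ∈ H := by
      intro g hg h1
      obtain ⟨h, hh, hF⟩ := FC_step H hg h1 (fun k hk => hH k c _ hk hc0)
      have := ih (c + 1) (by omega) (by omega) _ hF
      exact (H.mul_mem_cancel_left hh).1 this
    have main2 : ∀ g, FC (c : ℕ) g → ∀ i, c < i → g i c ≠ 0 → g ∈ H := by
      intro g hg i hi hne
      have hlt : (c : ℕ) < i := hi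
      have := main (el c i ((1 - g c c) / g i c) * g) (FC_el hg hi.ne (by omega) _) (by
        rw [el_mul_apply hi.ne]; field_simp; simp)
      exact (H.mul_mem_cancel_left (hH _ _ _ hi.ne (by omega))).1 this
    by_cases hex : ∃ i, c < i ∧ g i c ≠ 0
    · obtain ⟨i, hi, hne⟩ := hex
      exact main2 g hg i hi hne
    push Not at hex
    by_cases hlast : (c : ℕ) + 1 = n
    · exact main g hg (FC_last hg hlast)
    · have hu := FC_unit hg hex
      have hne : g c c ≠ 0 := by intro h; rw [h, mul_zero] at hu; exact zero_ne_one hu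
      have hlt : (c : ℕ) + 1 < n := by have := c.2; omega
      let i : Fin n := ⟨c + 1, hlt⟩
      have hci : c < i := by show (c : ℕ) < c + 1; omega
      have := main2 (el i c 1 * g) (FC_el hg hci.ne' le_rfl _) i hci (by
        rw [el_mul_apply hci.ne', hex i hci]; simpa using hne)
      exact (H.mul_mem_cancel_left (hH _ _ _ hci.ne' hc0)).1 this

lemma field_gen_top {n : ℕ} {K : Type*} [Field K]
    (H : Subgroup (Matrix.SpecialLinearGroup (Fin n) K))
    (hH : ∀ (k l : Fin n) (t : K), k ≠ l → el k l t ∈ H) : H = ⊤ := by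
  rw [eq_top_iff]
  intro g _
  exact field_gen 0 H (fun k l t h _ => hH k l t h) n 0 le_rfl (by omega) g
    (fun k l hl => by omega)

/-- w = e_ij e_ji^{-1} e_ij -/
def wel {n : ℕ} {R : Type*} [CommRing R] (i j : Fin n) : Matrix.SpecialLinearGroup (Fin n) R :=
  el i j 1 * el j i (-1) * el i j 1

lemma wel_mul_apply {n : ℕ} {R : Type*} [CommRing R] {i j : Fin n} (h : i ≠ j)
    (g : Matrix.SpecialLinearGroup (Fin n) R) (k l : Fin n) :
    ((wel i j * g : Matrix.SpecialLinearGroup (Fin n) R)) k l = if k = i then g j l else if k = j then - g i l else g k l := by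
  unfold wel
  rw [mul_assoc, mul_assoc]
  simp only [el_mul_apply h, el_mul_apply h.symm]
  by_cases h1 : k = i
  · subst h1; simp [h, h.symm]
  · by_cases h2 : k = j
    · subst h2; simp [h, h.symm]
    · simp [h1, h2]

lemma wel_sq_mul_apply {n : ℕ} {R : Type*} [CommRing R] {i j : Fin n} (h : i ≠ j)
    (g : Matrix.SpecialLinearGroup (Fin n) R) (k l : Fin n) :
    ((wel i j * wel i j * g : Matrix.SpecialLinearGroup (Fin n) R)) k l = if k = i ∨ k = j then - g k l else g k l := by
  rw [mul_assoc, wel_mul_apply h, wel_mul_apply h, wel_mul_apply h, wel_mul_apply h]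
  by_cases h1 : k = i
  · subst h1; simp [h.symm]
  · by_cases h2 : k = j
    · subst h2; simp [h.symm]
    · simp [h1, h2]

/-- congruent to identity mod 2 -/
def Ev {n : ℕ} (g : Matrix.SpecialLinearGroup (Fin n) ℤ) : Prop :=
  ∀ k l, (2 : ℤ) ∣ g k l - (1 : Matrix (Fin n) (Fin n) ℤ) k l

lemma Ev_iff {n : ℕ} (g : Matrix.SpecialLinearGroup (Fin n) ℤ) :
    Ev g ↔ Matrix.SpecialLinearGroup.map (Int.castRingHom (ZMod 2)) g = 1 := by
  constructor
  · intro h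
    ext k l
    have := (ZMod.intCast_zmod_eq_zero_iff_dvd (g k l - (1 : Matrix (Fin n) (Fin n) ℤ) k l) 2).2 (h k l)
    push_cast at this
    rw [sub_eq_zero] at this
    rw [Matrix.SpecialLinearGroup.map_apply_coe]
    simp [Matrix.one_apply] at this ⊢
    exact this
  · intro h k l
    have h2 : (Matrix.SpecialLinearGroup.map (Int.castRingHom (ZMod 2)) g) k l = (1 : Matrix (Fin n) (Fin n) (ZMod 2)) k l := by rw [h]; simp
    rw [Matrix.SpecialLinearGroup.map_apply_coe] at h2
    apply (ZMod.intCast_zmod_eq_zero_iff_dvd _ 2).1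
    push_cast
    rw [sub_eq_zero]
    simp [Matrix.one_apply] at h2 ⊢
    exact h2

lemma Ev_mul {n : ℕ} {g h : Matrix.SpecialLinearGroup (Fin n) ℤ} (hg : Ev g) (hh : Ev h) : Ev (g * h) := by
  rw [Ev_iff] at *; rw [map_mul, hg, hh, one_mul]

lemma Ev_el {n : ℕ} (i j : Fin n) (t : ℤ) : Ev (el i j (2 * t)) := by
  rw [Ev_iff, el_map]
  have : (Int.castRingHom (ZMod 2)) (2 * t) = 0 := by
    rw [map_mul]; simp; left; rfl
  rw [this, el_zero]

lemma Ev_wel_sq {n : ℕ} {i j : Fin n} (h : i ≠ j) : Ev (wel i j * wel i j) := by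
  intro k l
  have := wel_sq_mul_apply (R := ℤ) h 1 k l
  rw [mul_one] at this
  rw [this]
  split_ifs
  · simp only [Matrix.SpecialLinearGroup.coe_one]
    exact ⟨-(1 : Matrix (Fin n) (Fin n) ℤ) k l, by ring⟩
  · simp

/-- I2 -/
lemma gamma2_gen {n : ℕ} (H : Subgroup (Matrix.SpecialLinearGroup (Fin n) ℤ))
    (hH : ∀ (k l : Fin n) (t : ℤ), k ≠ l → el k l (2 * t) ∈ H)
    (hw : ∀ (k l : Fin n), k ≠ l → wel k l * wel k l ∈ H) :
    ∀ (d c : ℕ), n ≤ c + d → ∀ g, FC c g → Ev g → g ∈ H := by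
  intro d
  induction d with
  | zero =>
    intro c hn g hg _
    rw [FC_top (by omega) hg]; exact H.one_mem
  | succ d ih =>
    intro c hn g hg hev
    by_cases hcn : n ≤ c
    · rw [FC_top hcn hg]; exact H.one_mem
    push Not at hcn
    lift c to Fin n using hcn
    have main : ∀ g, FC (c : ℕ) g → Ev g → g c c = 1 → g ∈ H := by
      intro g hg hev h1
      let H' : Subgroup (Matrix.SpecialLinearGroup (Fin n) ℤ) :=
        H ⊓ (Matrix.SpecialLinearGroup.map (Int.castRingHom (ZMod 2))).ker
      obtain ⟨h, hh, hF⟩ := FC_step H' hg h1 (fun k hk => by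
        obtain ⟨m, hm⟩ := hev k c
        rw [Matrix.one_apply_ne hk, sub_zero] at hm
        rw [hm, ← mul_neg]
        exact ⟨hH k c _ hk, (Ev_iff _).1 (Ev_el _ _ _)⟩)
      have := ih (c + 1) (by omega) _ hF (Ev_mul ((Ev_iff _).2 hh.2) hev)
      exact (H.mul_mem_cancel_left hh.1).1 this
    -- Euclid
    have eucl : ∀ m : ℕ, ∀ g, FC (c : ℕ) g → Ev g →
        ∑ i ∈ Finset.univ.filter (fun i => c ≤ i), (g i c).natAbs ≤ m → g ∈ H := by
      intro m
      induction m using Nat.strong_induction_on with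
      | _ m ihm =>
      intro g hg hev hsum
      obtain ⟨a, ha⟩ := hev c c
      rw [Matrix.one_apply_eq] at ha
      by_cases hex : ∃ i, c < i ∧ g i c ≠ 0
      · obtain ⟨i, hi, hne⟩ := hex
        obtain ⟨b, hb⟩ := hev i c
        rw [Matrix.one_apply_ne hi.ne', sub_zero] at hb
        -- general descent
        have desc : ∀ (p q : Fin n) (e : ℤ), p ≠ q → c ≤ p → c ≤ q →
            (g p c + 2 * e * g q c).natAbs < (g p c).natAbs → g ∈ H := by
          intro p q e hpq hp hq hlt
          have hF := FC_el hg hpq (show (c : ℕ) ≤ q from hq) (2 * e)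
          have hE := Ev_mul (Ev_el p q e) hev
          have hs : ∑ i ∈ Finset.univ.filter (fun i => c ≤ i), ((el p q (2 * e) * g) i c).natAbs <
              ∑ i ∈ Finset.univ.filter (fun i => c ≤ i), (g i c).natAbs := by
            apply Finset.sum_lt_sum
            · intro k _
              rw [el_mul_apply hpq]
              by_cases hk : k = p
              · subst hk; simpa using hlt.le
              · simp [hk]
            · refine ⟨p, by simp [hp], ?_⟩
              rw [el_mul_apply hpq]; simpa using hlt
          have := ihm _ (lt_of_lt_of_le hs hsum) _ hF hE le_rfl
          exact (H.mul_mem_cancel_left (hH p q e hpq)).1 this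
        rcases lt_or_ge ((g i c).natAbs) ((g c c).natAbs) with h | h
        · by_cases hsg : (0 < g c c ∧ 0 < g i c) ∨ (g c c < 0 ∧ g i c < 0)
          · exact desc c i (-1) hi.ne le_rfl hi.le (by omega)
          · exact desc c i 1 hi.ne le_rfl hi.le (by omega)
        · by_cases hsg : (0 < g c c ∧ 0 < g i c) ∨ (g c c < 0 ∧ g i c < 0)
          · exact desc i c (-1) hi.ne' hi.le le_rfl (by omega)
          · exact desc i c 1 hi.ne' hi.le le_rfl (by omega)
      · push Not at hex
        by_cases hlast : (c : ℕ) + 1 = n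
        · exact main g hg hev (FC_last hg hlast)
        · have hu := FC_unit hg hex
          rcases Int.isUnit_iff.1 (IsUnit.of_mul_eq_one_right _ hu) with h1 | h1
          · exact main g hg hev h1
          · have hlt : (c : ℕ) + 1 < n := by have := c.2; omega
            let i : Fin n := ⟨c + 1, hlt⟩
            have hci : c < i := by show (c : ℕ) < c + 1; omega
            have := main (wel c i * wel c i * g) (by
              intro k l hl
              rw [wel_sq_mul_apply hci.ne, hg k l hl]
              have h2 : l < i := by
                show (l : ℕ) < c + 1
                omega
              have h3 : l < c := hl
              split_ifs with h4 h5 h5 <;> simp_all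
              rcases h4 with rfl | rfl <;> simp_all) (Ev_mul (Ev_wel_sq hci.ne) hev) (by
              rw [wel_sq_mul_apply hci.ne]; simp [h1])
            exact (H.mul_mem_cancel_left (hw _ _ hci.ne)).1 this
    exact eucl _ g hg hev le_rfl

lemma gamma2_mem {n : ℕ} (H : Subgroup (Matrix.SpecialLinearGroup (Fin n) ℤ))
    (hH : ∀ (k l : Fin n) (t : ℤ), k ≠ l → el k l (2 * t) ∈ H)
    (hw : ∀ (k l : Fin n), k ≠ l → wel k l * wel k l ∈ H)
    (g : Matrix.SpecialLinearGroup (Fin n) ℤ)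
    (hg : Matrix.SpecialLinearGroup.map (Int.castRingHom (ZMod 2)) g = 1) : g ∈ H :=
  gamma2_gen H hH hw n 0 (by omega) g (fun k l hl => by omega) ((Ev_iff g).2 hg)

lemma map2_surj {n : ℕ} : Function.Surjective
    (Matrix.SpecialLinearGroup.map (n := Fin n) (Int.castRingHom (ZMod 2))) := by
  rw [← MonoidHom.range_eq_top]
  apply field_gen_top
  intro k l t _
  obtain ⟨m, hm⟩ := ZMod.intCast_surjective t
  exact ⟨el k l m, by rw [el_map]; simp [hm]⟩

lemma int_gen {n : ℕ} (H : Subgroup (Matrix.SpecialLinearGroup (Fin n) ℤ))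
    (hH : ∀ (k l : Fin n), k ≠ l → el k l 1 ∈ H) : H = ⊤ := by
  have hZ : ∀ (k l : Fin n) (t : ℤ), k ≠ l → el k l t ∈ H := by
    intro k l t h
    have : ∀ t : ℤ, el k l t = (el k l 1 : Matrix.SpecialLinearGroup (Fin n) ℤ) ^ t := by
      intro t
      induction t using Int.induction_on with
      | zero => simp [el_zero]
      | succ i ih => rw [el_add, ih, _root_.zpow_add, zpow_one]
      | pred i ih => rw [sub_eq_add_neg, el_add, ih, _root_.zpow_add, ← el_inv, _root_.zpow_neg_one]
    rw [this]; exact H.zpow_mem (hH k l h) t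
  rw [eq_top_iff]
  intro g _
  have h1 : H.map (Matrix.SpecialLinearGroup.map (Int.castRingHom (ZMod 2))) = ⊤ := by
    apply field_gen_top
    intro k l t h
    obtain ⟨m, hm⟩ := ZMod.intCast_surjective t
    exact ⟨el k l m, hZ k l m h, by rw [el_map]; simp [hm]⟩
  have h2 : Matrix.SpecialLinearGroup.map (Int.castRingHom (ZMod 2)) g ∈
      H.map (Matrix.SpecialLinearGroup.map (Int.castRingHom (ZMod 2))) := by rw [h1]; trivial
  obtain ⟨h, hh, he⟩ := h2
  have hw : ∀ (k l : Fin n), k ≠ l → wel k l * wel k l ∈ H := by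
    intro k l hkl
    have : wel k l ∈ H := H.mul_mem (H.mul_mem (hZ _ _ _ hkl) (hZ _ _ _ hkl.symm)) (hZ _ _ _ hkl)
    exact H.mul_mem this this
  have := gamma2_mem H (fun k l t h => hZ k l _ h) hw (h⁻¹ * g) (by rw [map_mul, map_inv, he]; simp)
  exact (H.mul_mem_cancel_left (H.inv_mem hh)).1 this

/-- conjugation / commutation relations -/
lemma el_comm {n : ℕ} {R : Type*} [CommRing R] {i j k l : Fin n} (h1 : j ≠ k) (h2 : i ≠ l) (s t : R) :
    el i j s * el k l t = el k l t * el i j s := by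
  by_cases hij : i = j
  · simp [el, hij]
  by_cases hkl : k = l
  · simp [el, hkl]
  ext a b
  have e1 := el_mul_apply hij s (el k l t) a b
  have e2 := el_mul_apply hkl t (el i j s) a b
  rw [e1, e2]
  simp only [el_coe hij, el_coe hkl, Matrix.add_apply, Matrix.one_apply, Matrix.single_apply]
  by_cases ha : a = i <;> by_cases ha' : a = k <;> by_cases hb : j = b <;> by_cases hb' : l = b <;>
    simp_all [eq_comm] <;> ring

lemma el_comm3 {n : ℕ} {R : Type*} [CommRing R] {i j k : Fin n} (h1 : i ≠ j) (h2 : j ≠ k) (h3 : i ≠ k)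
    (s t : R) :
    el i j s * el j k t = el i k (s * t) * el j k t * el i j s := by
  ext a b
  rw [mul_assoc]
  have e1 := el_mul_apply h1 s (el j k t) a b
  have e2 := el_mul_apply h3 (s * t) (el j k t * el i j s) a b
  rw [e1, e2]
  have e3 := el_mul_apply h2 t (el i j s) a b
  have e4 := el_mul_apply h2 t (el i j s) k b
  rw [e3, e4]
  simp only [el_coe h1, el_coe h2, Matrix.add_apply, Matrix.one_apply, Matrix.single_apply]
  by_cases ha : a = i
  · subst ha
    by_cases hb : j = b
    · subst hb; simp_all [eq_comm]
    · by_cases hb' : k = b <;> simp_all [eq_comm]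
  · by_cases ha' : a = j
    · subst ha'
      by_cases hb : k = b <;> simp_all [eq_comm]
    · simp_all [eq_comm]

end SLX

namespace SLX

lemma three_pow {V ι : Type*} [AddCommGroup V] [Module ℂ V] [FiniteDimensional ℂ V] [DecidableEq ι]
    (X U : ι → Module.End ℂ V) (lam : ℂ) (h0 : lam ≠ 0) (h1 : lam ^ 2 ≠ 1) (S : Finset ι) :
    ∀ W : Submodule ℂ V, W ≠ ⊥ →
      (∀ a ∈ S, ∀ w ∈ W, X a w ∈ W) → (∀ a ∈ S, ∀ w ∈ W, U a w ∈ W) →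
      (∀ a ∈ S, ∀ b ∈ S, ∀ w ∈ W, X a (X b w) = X b (X a w)) →
      (∀ a ∈ S, ∀ b ∈ S, a ≠ b → ∀ w ∈ W, X a (U b w) = U b (X a w)) →
      (∀ a ∈ S, ∀ w ∈ W, X a (U a w) = lam • U a (X a w)) →
      (∀ a ∈ S, Function.Injective (U a)) → (∀ a ∈ S, Function.Injective (X a)) →
      3 ^ S.card ≤ Module.finrank ℂ W := by
  induction S using Finset.induction_on with
  | empty =>
    intro W hW _ _ _ _ _ _ _
    have := Submodule.nontrivial_iff_ne_bot.2 hW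
    simpa [Nat.one_le_iff_ne_zero] using (Module.finrank_pos (R := ℂ) (M := W)).ne'
  | insert a S ha ih =>
    intro W hW hX hU hXX hXU hXUa hUi hXi
    have ma : a ∈ insert a S := Finset.mem_insert_self _ _
    have := Submodule.nontrivial_iff_ne_bot.2 hW
    obtain ⟨c, hc⟩ := Module.End.exists_eigenvalue ((X a).restrict (fun w hw => hX a ma w hw) : Module.End ℂ W)
    obtain ⟨w, hw⟩ := hc.exists_hasEigenvector
    have hwe : X a (w : V) = c • (w : V) := congrArg Subtype.val hw.apply_eq_smul
    have hw0 : (w : V) ≠ 0 := fun h => hw.2 (Subtype.ext h)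
    have hc0 : c ≠ 0 := by
      rintro rfl
      rw [zero_smul, ← map_zero (X a)] at hwe
      exact hw0 (hXi a ma hwe)
    let W' : Submodule ℂ V := W ⊓ Module.End.eigenspace (X a) c
    have memW' : ∀ v, v ∈ W' ↔ v ∈ W ∧ X a v = c • v := by
      intro v; simp [W', Module.End.mem_eigenspace_iff]
    have hW' : W' ≠ ⊥ := by
      intro h
      have : (w : V) ∈ W' := (memW' _).2 ⟨w.2, hwe⟩
      rw [h] at this
      exact hw0 (by simpa using this)
    have key := ih W' hW'
      (fun b hb v hv => by
        have hb' := (Finset.mem_insert_of_mem hb : b ∈ insert a S)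
        obtain ⟨h1, h2⟩ := (memW' v).1 hv
        exact (memW' _).2 ⟨hX b hb' v h1, by rw [hXX a ma b hb' v h1, h2, map_smul]⟩)
      (fun b hb v hv => by
        have hb' := (Finset.mem_insert_of_mem hb : b ∈ insert a S)
        have hab : a ≠ b := by rintro rfl; exact ha hb
        obtain ⟨h1, h2⟩ := (memW' v).1 hv
        exact (memW' _).2 ⟨hU b hb' v h1, by rw [hXU a ma b hb' hab v h1, h2, map_smul]⟩)
      (fun b hb b' hb' v hv => hXX b (Finset.mem_insert_of_mem hb) b' (Finset.mem_insert_of_mem hb') v ((memW' v).1 hv).1)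
      (fun b hb b' hb' h v hv => hXU b (Finset.mem_insert_of_mem hb) b' (Finset.mem_insert_of_mem hb') h v ((memW' v).1 hv).1)
      (fun b hb v hv => hXUa b (Finset.mem_insert_of_mem hb) v ((memW' v).1 hv).1)
      (fun b hb => hUi b (Finset.mem_insert_of_mem hb))
      (fun b hb => hXi b (Finset.mem_insert_of_mem hb))
    let L0 : (W' × W' × W') →ₗ[ℂ] V :=
      W'.subtype.coprod ((U a ∘ₗ W'.subtype).coprod (U a ∘ₗ U a ∘ₗ W'.subtype))
    have hL0 : ∀ p, L0 p = (p.1 : V) + (U a p.2.1 + U a (U a p.2.2)) := fun p => rfl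
    have hL0W : ∀ p, L0 p ∈ W := by
      intro p
      rw [hL0]
      have m1 := ((memW' _).1 p.1.2).1
      have m2 := ((memW' _).1 p.2.1.2).1
      have m3 := ((memW' _).1 p.2.2.2).1
      exact W.add_mem m1 (W.add_mem (hU a ma _ m2) (hU a ma _ (hU a ma _ m3)))
    let L : (W' × W' × W') →ₗ[ℂ] W := L0.codRestrict W hL0W
    have hinj : Function.Injective L := by
      rw [← LinearMap.ker_eq_bot, LinearMap.ker_eq_bot']
      intro p hp
      have hp0 : L0 p = 0 := congrArg Subtype.val hp
      obtain ⟨⟨x, hx⟩, ⟨y, hy⟩, ⟨z, hz⟩⟩ := p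
      rw [hL0] at hp0
      simp only at hp0
      obtain ⟨hx1, hx2⟩ := (memW' _).1 hx
      obtain ⟨hy1, hy2⟩ := (memW' _).1 hy
      obtain ⟨hz1, hz2⟩ := (memW' _).1 hz
      have ey : X a (U a y) = (lam * c) • U a y := by
        rw [hXUa a ma y hy1, hy2, map_smul, smul_smul]
      have ez : X a (U a (U a z)) = (lam ^ 2 * c) • U a (U a z) := by
        rw [hXUa a ma _ (hU a ma _ hz1), hXUa a ma z hz1, hz2, map_smul, map_smul, map_smul, smul_smul, smul_smul]
        ring_nf
      set y' := U a y with hy'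
      set z' := U a (U a z) with hz'
      have q1 : c • x + ((lam * c) • y' + (lam ^ 2 * c) • z') = 0 := by
        have := congrArg (X a) hp0
        rwa [map_add, map_add, hx2, ey, ez, map_zero] at this
      have q2 : (c * c) • x + ((lam * c * (lam * c)) • y' + (lam ^ 2 * c * (lam ^ 2 * c)) • z') = 0 := by
        have := congrArg (X a) q1
        rwa [map_add, map_add, map_smul, map_smul, map_smul, hx2, ey, ez, map_zero, smul_smul, smul_smul, smul_smul] at this
      have hl1 : lam - 1 ≠ 0 := by
        intro h; apply h1; rw [sub_eq_zero.1 h]; ring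
      have hl2 : lam + 1 ≠ 0 := by
        intro h; apply h1; rw [eq_neg_of_add_eq_zero_left h]; ring
      have ez0 : z' = 0 := by
        have h3 : (c ^ 2 * lam * (lam - 1) ^ 2 * (lam + 1)) • z' = 0 := by
          have e : (c ^ 2 * lam * (lam - 1) ^ 2 * (lam + 1)) • z' =
            ((c * c) • x + ((lam * c * (lam * c)) • y' + (lam ^ 2 * c * (lam ^ 2 * c)) • z'))
            - (c * (1 + lam)) • (c • x + ((lam * c) • y' + (lam ^ 2 * c) • z'))
            + (c * c * lam) • (x + (y' + z')) := by module
          rw [e, q1, q2, hp0]; simp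
        refine (smul_eq_zero.1 h3).resolve_left ?_
        positivity
      rw [ez0] at hp0 q1
      have ey0 : y' = 0 := by
        have h3 : (c * (lam - 1)) • y' = 0 := by
          have e : (c * (lam - 1)) • y' = (c • x + ((lam * c) • y' + (lam ^ 2 * c) • (0 : V))) - c • (x + (y' + 0)) := by module
          rw [e, q1, hp0]; simp
        exact (smul_eq_zero.1 h3).resolve_left (mul_ne_zero hc0 hl1)
      rw [ey0] at hp0
      have ex0 : x = 0 := by simpa using hp0
      have ey1 : y = 0 := hUi a ma (by rw [map_zero]; exact ey0)
      have ez1 : z = 0 := hUi a ma (hUi a ma (by rw [map_zero, map_zero]; exact ez0))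
      subst ex0; subst ey1; subst ez1; rfl
    have hd := LinearMap.finrank_le_finrank_of_injective hinj
    rw [Module.finrank_prod, Module.finrank_prod] at hd
    rw [Finset.card_insert_of_notMem ha, pow_succ]
    omega

/-- the representation as endomorphisms -/
noncomputable def repEnd {G : Type*} [Group G] {N : ℕ} (ρ : G →* GL (Fin N) ℂ) :
    G →* Module.End ℂ (Fin N → ℂ) :=
  ((Matrix.toLinAlgEquiv' : Matrix (Fin N) (Fin N) ℂ ≃ₐ[ℂ] _) :
    Matrix (Fin N) (Fin N) ℂ →* Module.End ℂ (Fin N → ℂ)).comp ((Units.coeHom _).comp ρ)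

lemma repEnd_apply {G : Type*} [Group G] {N : ℕ} (ρ : G →* GL (Fin N) ℂ) (g : G) :
    repEnd ρ g = Matrix.toLinAlgEquiv' ((ρ g : GL (Fin N) ℂ) : Matrix (Fin N) (Fin N) ℂ) := rfl

lemma rep_inj {G V : Type*} [Group G] [AddCommGroup V] [Module ℂ V] (T : G →* Module.End ℂ V) (g : G) :
    Function.Injective (T g) := by
  intro x y h
  have := congrArg (T g⁻¹) h
  rw [← Module.End.mul_apply, ← Module.End.mul_apply, ← map_mul, inv_mul_cancel, map_one] at this
  simpa using this

lemma sign_conj {n : ℕ} {i j k : Fin n} (hij : i ≠ j) (hik : i ≠ k) (hjk : j ≠ k) :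
    wel j k * wel j k * el i j 1 = el i j (-1) * (wel j k * wel j k : Matrix.SpecialLinearGroup (Fin n) ℤ) := by
  ext a b
  rw [wel_sq_mul_apply hjk, el_mul_apply hij]
  have e : ∀ a b, (wel j k * wel j k : Matrix.SpecialLinearGroup (Fin n) ℤ) a b =
      if a = j ∨ a = k then - (1 : Matrix (Fin n) (Fin n) ℤ) a b else (1 : Matrix (Fin n) (Fin n) ℤ) a b := by
    intro a b
    have := wel_sq_mul_apply (R := ℤ) hjk 1 a b
    rwa [mul_one] at this
  rw [e, e, el_coe hij, Matrix.add_apply, Matrix.single_apply]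
  by_cases ha : a = i
  · subst ha; simp [hij, hik, Matrix.one_apply]; split_ifs <;> simp
  · by_cases h2 : a = j ∨ a = k <;> simp [ha, h2, Ne.symm ha]

lemma eig_pm {n N : ℕ} (hn : 5 ≤ n) (hdim : N < 2 ^ n - 2)
    (T : Matrix.SpecialLinearGroup (Fin n) ℤ →* Module.End ℂ (Fin N → ℂ)) {i j : Fin n} (hij : i ≠ j)
    (lam : ℂ) (h : Module.End.HasEigenvalue (T (el i j 1)) lam) : lam ^ 2 = 1 := by
  by_contra hlam
  obtain ⟨v, hv⟩ := h.exists_hasEigenvector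
  have hve := hv.apply_eq_smul
  have hl0 : lam ≠ 0 := by
    rintro rfl
    rw [zero_smul, ← map_zero (T (el i j 1))] at hve
    exact hv.2 (rep_inj T _ hve)
  have hc : ∀ g h x, T g (T h x) = T (g * h) x := fun g h x => by
    rw [map_mul, Module.End.mul_apply]
  have hS : ((Finset.univ.erase i).erase j).card = n - 2 := by
    rw [Finset.card_erase_of_mem (by simp [hij.symm]), Finset.card_erase_of_mem (by simp)]; simp; omega
  have bound : ∀ mu : ℂ, mu ≠ 0 → mu ^ 2 ≠ 1 → Module.End.eigenspace (T (el i j 1)) mu ≠ ⊥ →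
      3 ^ (n - 2) ≤ Module.finrank ℂ (Module.End.eigenspace (T (el i j 1)) mu) := by
    intro mu h0 h1 hb
    rw [← hS]
    refine three_pow (fun k => T (el i k 1)) (fun k => T (el k j 1)) mu h0 h1 _ _ hb ?_ ?_ ?_ ?_ ?_ ?_ ?_
    · intro a ha w hw
      simp only [Finset.mem_erase, Finset.mem_univ, and_true, ne_eq] at ha
      rw [Module.End.mem_eigenspace_iff] at hw ⊢
      rw [hc, el_comm hij.symm (Ne.symm ha.2), ← hc, hw, map_smul]
    · intro a ha w hw
      simp only [Finset.mem_erase, Finset.mem_univ, and_true, ne_eq] at ha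
      rw [Module.End.mem_eigenspace_iff] at hw ⊢
      rw [hc, el_comm (Ne.symm ha.1) hij, ← hc, hw, map_smul]
    · intro a ha b hb w hw
      simp only [Finset.mem_erase, Finset.mem_univ, and_true, ne_eq] at ha hb
      rw [hc, el_comm ha.2 (Ne.symm hb.2), ← hc]
    · intro a ha b hb hab w hw
      simp only [Finset.mem_erase, Finset.mem_univ, and_true, ne_eq] at ha hb
      rw [hc, el_comm hab hij, ← hc]
    · intro a ha w hw
      simp only [Finset.mem_erase, Finset.mem_univ, and_true, ne_eq] at ha
      rw [Module.End.mem_eigenspace_iff] at hw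
      have e : (el i a 1 * el a j 1 : Matrix.SpecialLinearGroup (Fin n) ℤ) = el a j 1 * el i a 1 * el i j 1 := by
        rw [el_comm3 (Ne.symm ha.2) ha.1 hij, mul_one, mul_assoc,
          mul_assoc, el_comm ha.2 (Ne.symm hij |> Ne.symm), ← mul_assoc, el_comm (Ne.symm ha.1) hij, mul_assoc,
          el_comm (i := i) (j := j) (k := i) (l := a) hij.symm (Ne.symm ha.2), ← mul_assoc]
      rw [hc, e, ← hc, hw, map_smul, ← hc]
    · intro a ha; exact rep_inj T _
    · intro a ha; exact rep_inj T _
  have b1 := bound lam hl0 hlam h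
  have hli : lam⁻¹ ≠ lam := by
    intro h; apply hlam
    rw [sq]; nth_rewrite 2 [← h]; exact mul_inv_cancel₀ hl0
  obtain ⟨k, hk⟩ : ∃ k : Fin n, k ∉ ({i, j} : Finset (Fin n)) := by
    by_contra hcon
    push Not at hcon
    have h2 : Finset.univ ⊆ ({i, j} : Finset (Fin n)) := fun x _ => hcon x
    have := (Finset.card_le_card h2).trans (Finset.card_le_two)
    simp at this; omega
  simp only [Finset.mem_insert, Finset.mem_singleton, not_or] at hk
  have e2 := sign_conj hij (Ne.symm hk.1) (Ne.symm hk.2)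
  have b2 := bound lam⁻¹ (inv_ne_zero hl0) (by
      intro h; apply hlam; rw [inv_pow, inv_eq_one] at h; exact h) (by
    intro hbot
    have hm : T (wel j k * wel j k) v ∈ Module.End.eigenspace (T (el i j 1)) lam⁻¹ := by
      rw [Module.End.mem_eigenspace_iff]
      have h3 : T (el i j (-1)) (T (wel j k * wel j k) v) = lam • (T (wel j k * wel j k) v) := by
        rw [hc, ← e2, ← hc, hve, map_smul]
      have h4 := congrArg (T (el i j 1)) h3
      rw [hc, ← el_add] at h4
      rw [map_smul, add_neg_cancel, el_zero, map_one, Module.End.one_apply] at h4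
      nth_rewrite 2 [h4]
      rw [smul_smul, inv_mul_cancel₀ hl0, one_smul]
    rw [hbot, Submodule.mem_bot, ← map_zero (T (wel j k * wel j k))] at hm
    exact hv.2 (rep_inj T _ hm))
  have hdisj : Disjoint (Module.End.eigenspace (T (el i j 1)) lam) (Module.End.eigenspace (T (el i j 1)) lam⁻¹) :=
    Module.End.disjoint_genEigenspace _ hli.symm 1 1
  have hsum := Submodule.finrank_add_finrank_le_of_disjoint hdisj
  rw [Module.finrank_fin_fun] at hsum
  obtain ⟨m, rfl⟩ : ∃ m, n = m + 5 := ⟨n - 5, by omega⟩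
  have e3 : m + 5 - 2 = m + 3 := by omega
  rw [e3] at b1 b2
  have h5 : 2 ^ m ≤ 3 ^ m := Nat.pow_le_pow_left (by norm_num) m
  rw [pow_add] at b1 b2 hdim
  omega

lemma unip {n N : ℕ} (hn : 5 ≤ n) (hdim : N < 2 ^ n - 2)
    (ρ : Matrix.SpecialLinearGroup (Fin n) ℤ →* GL (Fin N) ℂ) {i j : Fin n} (hij : i ≠ j) :
    IsNilpotent (((ρ (el i j 2) : GL (Fin N) ℂ) : Matrix (Fin N) (Fin N) ℂ) - 1) := by
  set x := repEnd ρ (el i j 1) with hx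
  have hx2 : repEnd ρ (el i j 2) = x ^ 2 := by
    rw [hx, sq, ← map_mul, ← el_add]; norm_num
  have hnil : IsNilpotent (x ^ 2 - 1) := by
    have hroots : ∀ μ ∈ (minpoly ℂ (x ^ 2 - 1)).roots, μ = 0 := by
      intro μ hμ
      have h1 : Module.End.HasEigenvalue (x ^ 2 - 1) μ :=
        Module.End.hasEigenvalue_of_isRoot (Polynomial.isRoot_of_mem_roots hμ)
      have h2 : μ ∈ spectrum ℂ (x ^ 2 - 1) := h1.mem_spectrum
      have h3 : x ^ 2 - 1 = Polynomial.aeval x (Polynomial.X ^ 2 - 1 : Polynomial ℂ) := by simp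
      rcases subsingleton_or_nontrivial (Module.End ℂ (Fin N → ℂ)) with hs | hs
      · rw [spectrum.of_subsingleton] at h2; exact h2.elim
      rw [h3, spectrum.map_polynomial_aeval_of_nonempty x _ (spectrum.nonempty_of_isAlgClosed_of_finiteDimensional ℂ x)] at h2
      obtain ⟨lam, hlam, rfl⟩ := h2
      have h4 := eig_pm hn hdim (repEnd ρ) hij lam (Module.End.hasEigenvalue_iff_mem_spectrum.2 hlam)
      simp [h4]
    have hsp := (IsAlgClosed.splits (minpoly ℂ (x ^ 2 - 1))).eq_prod_roots_of_monic (minpoly.monic (Algebra.IsIntegral.isIntegral _))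
    refine ⟨(minpoly ℂ (x ^ 2 - 1)).roots.card, ?_⟩
    have h5 : minpoly ℂ (x ^ 2 - 1) = Polynomial.X ^ (minpoly ℂ (x ^ 2 - 1)).roots.card := by
      nth_rewrite 1 [hsp]
      rw [Multiset.map_congr rfl (g := fun _ => Polynomial.X) (fun a ha => by rw [hroots a ha]; simp)]
      simp
    have h6 := minpoly.aeval ℂ (x ^ 2 - 1)
    rw [h5] at h6
    simpa using h6
  rw [← hx2, repEnd_apply] at hnil
  have h7 := hnil.map (Matrix.toLinAlgEquiv' : Matrix (Fin N) (Fin N) ℂ ≃ₐ[ℂ] _).symm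
  simpa using h7

end SLX

namespace SLX

attribute [local instance] LieRing.ofAssociativeRing

/-- systems of one-parameter groups satisfying the non-opposite Steinberg relations -/
structure Sys (n : ℕ) (A : Type*) [NormedRing A] [NormedAlgebra ℂ A] where
  X : Fin n → Fin n → ℂ → A
  diff : ∀ i j, Differentiable ℂ (X i j)
  zero : ∀ i j, X i j 0 = 1
  add : ∀ i j s t, X i j (s + t) = X i j s * X i j t
  comm : ∀ i j k l s t, i ≠ j → k ≠ l → j ≠ k → i ≠ l → X i j s * X k l t = X k l t * X i j s
  comm3 : ∀ i j k s t, i ≠ j → j ≠ k → i ≠ k →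
    X i j s * X j k t = X i k (s * t) * X j k t * X i j s

namespace Sys
variable {n : ℕ} {A : Type*} [NormedRing A] [NormedAlgebra ℂ A] (S : Sys n A)

noncomputable def d (i j : Fin n) : A := deriv (S.X i j) 0

lemma hasDeriv0 (i j : Fin n) : HasDerivAt (S.X i j) (S.d i j) 0 :=
  (S.diff i j 0).hasDerivAt

lemma hasDeriv (i j : Fin n) (t : ℂ) : HasDerivAt (S.X i j) (S.d i j * S.X i j t) t := by
  have h1 : HasDerivAt (fun s => S.X i j (s - t) * S.X i j t) (S.d i j * S.X i j t) t := by
    have h0 : HasDerivAt (S.X i j) (S.d i j) (t - t) := by rw [sub_self]; exact S.hasDeriv0 i j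
    have := (HasDerivAt.comp_sub_const t t h0).mul_const (S.X i j t)
    exact this
  have h2 : (fun s => S.X i j (s - t) * S.X i j t) = S.X i j := by
    funext s; rw [← S.add, sub_add_cancel]
  rwa [h2] at h1

lemma mul_neg (i j : Fin n) (t : ℂ) : S.X i j t * S.X i j (-t) = 1 := by
  rw [← S.add, add_neg_cancel, S.zero]

lemma neg_mul (i j : Fin n) (t : ℂ) : S.X i j (-t) * S.X i j t = 1 := by
  rw [← S.add, neg_add_cancel, S.zero]

lemma d_comm_X (i j : Fin n) (t : ℂ) : S.d i j * S.X i j t = S.X i j t * S.d i j := by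
  have h1 : HasDerivAt (fun s => S.X i j s * S.X i j t) (S.d i j * S.X i j t) 0 :=
    (S.hasDeriv0 i j).mul_const _
  have h2 : HasDerivAt (fun s => S.X i j t * S.X i j s) (S.X i j t * S.d i j) 0 :=
    (S.hasDeriv0 i j).const_mul _
  have h3 : (fun s => S.X i j s * S.X i j t) = fun s => S.X i j t * S.X i j s := by
    funext s; rw [← S.add, ← S.add, add_comm]
  rw [h3] at h1
  exact h1.unique h2

lemma lie0 {i j k l : Fin n} (hij : i ≠ j) (hkl : k ≠ l) (h1 : j ≠ k) (h2 : i ≠ l) :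
    ⁅S.d i j, S.d k l⁆ = 0 := by
  have e1 : ∀ t, S.d i j * S.X k l t = S.X k l t * S.d i j := by
    intro t
    have a1 := (S.hasDeriv0 i j).mul_const (S.X k l t)
    have a2 := (S.hasDeriv0 i j).const_mul (S.X k l t)
    have a3 : (fun s => S.X i j s * S.X k l t) = fun s => S.X k l t * S.X i j s := by
      funext s; exact S.comm i j k l s t hij hkl h1 h2
    rw [a3] at a1
    exact a1.unique a2
  have a1 := (S.hasDeriv0 k l).const_mul (S.d i j)
  have a2 := (S.hasDeriv0 k l).mul_const (S.d i j)
  simp only [e1] at a1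
  rw [Ring.lie_def, a1.unique a2, sub_self]

lemma lie1 {i j k : Fin n} (hij : i ≠ j) (hjk : j ≠ k) (hik : i ≠ k) :
    ⁅S.d i j, S.d j k⁆ = S.d i k := by
  have e1 : ∀ t, S.d i j * S.X j k t = t • S.d i k * S.X j k t + S.X j k t * S.d i j := by
    intro t
    have a1 := (S.hasDeriv0 i j).mul_const (S.X j k t)
    have b0 : HasDerivAt (fun s : ℂ => S.X i k (s * t)) (t • S.d i k) 0 := by
      have h0 : HasDerivAt (S.X i k) (S.d i k) (0 * t) := by rw [zero_mul]; exact S.hasDeriv0 i k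
      have := HasDerivAt.scomp (0 : ℂ) h0 ((hasDerivAt_id (0 : ℂ)).mul_const t)
      simpa [Function.comp_def] using this
    have a2 := (b0.mul_const (S.X j k t)).mul (S.hasDeriv0 i j)
    have a3 : (fun s => S.X i j s * S.X j k t) = fun s => S.X i k (s * t) * S.X j k t * S.X i j s := by
      funext s; exact S.comm3 i j k s t hij hjk hik
    rw [a3] at a1
    have := a1.unique a2
    rw [this]; simp [S.zero]
  have a1 := (S.hasDeriv0 j k).const_mul (S.d i j)
  have a2 : HasDerivAt (fun t : ℂ => t • S.d i k * S.X j k t + S.X j k t * S.d i j) _ 0 :=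
    (((hasDerivAt_id (0 : ℂ)).smul_const (S.d i k)).mul (S.hasDeriv0 j k)).add ((S.hasDeriv0 j k).mul_const (S.d i j))
  simp only [e1] at a1
  rw [Ring.lie_def, a1.unique a2]
  simp [S.zero]

noncomputable def h (i j : Fin n) : A := if i = j then 0 else ⁅S.d i j, S.d j i⁆

lemma h_self (i : Fin n) : S.h i i = 0 := by simp [h]
lemma h_skew (i j : Fin n) : S.h i j = - S.h j i := by
  unfold h
  by_cases hij : i = j
  · simp [hij]
  · rw [if_neg hij, if_neg (Ne.symm hij), lie_skew]

lemma h_add (i j k : Fin n) : S.h i k = S.h i j + S.h j k := by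
  by_cases hij : i = j
  · subst hij; simp [h_self]
  by_cases hjk : j = k
  · subst hjk; simp [h_self]
  by_cases hik : i = k
  · subst hik; rw [S.h_skew i j]; simp [h_self]
  unfold h
  rw [if_neg hik, if_neg hij, if_neg hjk]
  have e := lie_lie (S.d i j) (S.d j k) (S.d k i)
  rw [S.lie1 hij hjk hik, S.lie1 hjk (Ne.symm hik) (Ne.symm hij),
    ← lie_skew (S.d i j) (S.d k i), S.lie1 (Ne.symm hik) hij (Ne.symm hjk)] at e
  rw [e, lie_neg, sub_neg_eq_add]

lemma lie_h_aux1 {i j k : Fin n} (hij : i ≠ j) (hik : i ≠ k) (hjk : j ≠ k) :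
    ⁅S.d i j, S.h i k⁆ = - S.d i j := by
  unfold h
  rw [if_neg hik, leibniz_lie, S.lie0 hij hik hij.symm hik, zero_lie, zero_add,
    ← lie_skew (S.d i j) (S.d k i), S.lie1 hik.symm hij hjk.symm, lie_neg, S.lie1 hik hjk.symm hij]

lemma lie_h_aux2 {i j k : Fin n} (hij : i ≠ j) (hik : i ≠ k) (hjk : j ≠ k) :
    ⁅S.d i j, S.h k j⁆ = - S.d i j := by
  unfold h
  rw [if_neg hjk.symm, leibniz_lie, S.lie0 hij hjk.symm hjk hij, zero_lie, zero_add,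
    S.lie1 hij hjk hik, ← lie_skew, S.lie1 hik hjk.symm hij]

lemma exists_third (hn : 3 ≤ n) (i j : Fin n) : ∃ k : Fin n, i ≠ k ∧ j ≠ k := by
  by_contra hcon
  push Not at hcon
  have h2 : Finset.univ ⊆ ({i, j} : Finset (Fin n)) := fun x _ => by
    by_cases h : i = x
    · simp [h]
    · simp [hcon x h]
  have := (Finset.card_le_card h2).trans (Finset.card_le_two)
  simp at this; omega

/-- delta-like -/
def dl (i j : Fin n) : ℂ := if i = j then 1 else 0

lemma lie_h1 (hn : 3 ≤ n) {i j : Fin n} (hij : i ≠ j) (m : Fin n) :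
    ⁅S.d i j, S.h i m⁆ = (-1 - dl j m + dl i m) • S.d i j := by
  by_cases h1 : i = m
  · subst h1; simp [h_self, dl, hij.symm]
  by_cases h2 : j = m
  · subst h2
    obtain ⟨k, hik, hjk⟩ := exists_third hn i j
    rw [S.h_add i k j, lie_add, S.lie_h_aux1 hij hik hjk, S.lie_h_aux2 hij hik hjk]
    simp only [dl, hij, if_false, if_true]; module
  · rw [S.lie_h_aux1 hij h1 h2]; simp [dl, h1, h2]

lemma lie_h (hn : 3 ≤ n) {i j : Fin n} (hij : i ≠ j) (k m : Fin n) :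
    ⁅S.d i j, S.h k m⁆ = (dl j k - dl i k - dl j m + dl i m) • S.d i j := by
  rw [S.h_add k i m, S.h_skew k i, lie_add, lie_neg, S.lie_h1 hn hij, S.lie_h1 hn hij]
  module

noncomputable def E (i j : Fin n) : A :=
  if i = j then (n : ℂ)⁻¹ • ∑ k, S.h i k else S.d i j

lemma E_ne {i j : Fin n} (hij : i ≠ j) : S.E i j = S.d i j := by simp [E, hij]

lemma lie_E (hn : 3 ≤ n) {i j : Fin n} (hij : i ≠ j) (k l : Fin n) :
    ⁅S.d i j, S.E k l⁆ = dl j k • S.E i l - dl l i • S.E k j := by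
  have hn0 : (n : ℂ) ≠ 0 := by exact_mod_cast (by omega : n ≠ 0)
  by_cases hkl : k = l
  · subst hkl
    have e : ⁅S.d i j, S.E k k⁆ = (dl j k - dl i k) • S.d i j := by
      simp only [E, if_true, lie_smul, lie_sum, S.lie_h hn hij, ← Finset.sum_smul, smul_smul]
      congr 1
      simp only [Finset.sum_add_distrib, Finset.sum_sub_distrib, Finset.sum_const, dl]
      simp
      field_simp
      split_ifs <;> ring
    rw [e, sub_smul]
    congr 1
    · by_cases h : j = k
      · subst h; rw [S.E_ne hij]
      · simp [dl, h]
    · by_cases h : i = k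
      · subst h; rw [S.E_ne hij]
      · simp [dl, h, Ne.symm h]
  · rw [S.E_ne hkl]
    by_cases h1 : j = k
    · subst h1
      by_cases h2 : i = l
      · subst h2
        simp only [dl, if_true, one_smul]
        simp only [E, if_true, ← smul_sub, ← Finset.sum_sub_distrib]
        have : ∀ x, S.h i x - S.h j x = S.h i j := fun x => by
          rw [S.h_add i j x]; abel
        simp only [this, Finset.sum_const, Finset.card_univ, Fintype.card_fin]
        rw [← Nat.cast_smul_eq_nsmul ℂ, smul_smul, inv_mul_cancel₀ hn0, one_smul]
        simp [h, hij]
      · rw [S.lie1 hij hkl h2, S.E_ne h2]; simp [dl, Ne.symm h2]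
    · by_cases h2 : i = l
      · subst h2
        rw [← lie_skew, S.lie1 hkl hij (Ne.symm h1), S.E_ne (Ne.symm h1)]; simp [dl, h1]
      · rw [S.lie0 hij hkl h1 h2]; simp [dl, h1, Ne.symm h2]

/-- the Lie algebra representation (on gl_n, trivial on scalars) -/
noncomputable def sg : Matrix (Fin n) (Fin n) ℂ →ₗ[ℂ] A where
  toFun Y := ∑ k, ∑ l, Y k l • S.E k l
  map_add' Y Z := by simp [add_smul, Finset.sum_add_distrib]
  map_smul' c Y := by simp [Finset.smul_sum, smul_smul]

lemma sg_apply (Y : Matrix (Fin n) (Fin n) ℂ) : S.sg Y = ∑ k, ∑ l, Y k l • S.E k l := rfl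

lemma sg_single (i j : Fin n) (c : ℂ) : S.sg (Matrix.single i j c) = c • S.E i j := by
  rw [sg_apply, Finset.sum_eq_single i, Finset.sum_eq_single j]
  · simp
  · intro b _ hb; simp [Matrix.single_apply, Ne.symm hb]
  · simp
  · intro b _ hb; simp [Matrix.single_apply, Ne.symm hb]
  · simp

lemma lie_sg (hn : 3 ≤ n) {i j : Fin n} (hij : i ≠ j) (Y : Matrix (Fin n) (Fin n) ℂ) :
    ⁅S.d i j, S.sg Y⁆ = S.sg (Matrix.single i j 1 * Y - Y * Matrix.single i j 1) := by
  induction Y using Matrix.induction_on' with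
  | h_zero => simp
  | h_add p q hp hq => 
    rw [map_add, lie_add, hp, hq, ← map_add]; congr 1; simp only [mul_add, add_mul]; abel
  | h_std_basis k l x =>
    rw [sg_single, lie_smul, S.lie_E hn hij, map_sub]
    congr 1
    have e1 : S.sg (Matrix.single i j 1 * Matrix.single k l x) = (x * dl j k) • S.E i l := by
      by_cases h : j = k
      · subst h; simp [sg_single, dl]
      · rw [Matrix.single_mul_single_of_ne _ _ _ _ h]; simp [dl, h]
    have e2 : S.sg (Matrix.single k l x * Matrix.single i j 1) = (x * dl l i) • S.E k j := by
      by_cases h : l = i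
      · subst h; simp [sg_single, dl]
      · rw [Matrix.single_mul_single_of_ne _ _ _ _ h]; simp [dl, h]
    rw [e1, e2, smul_sub, smul_smul, smul_smul]

/-- conjugation -/
lemma conj_sg (hn : 3 ≤ n) {i j : Fin n} (hij : i ≠ j) (Y : Matrix (Fin n) (Fin n) ℂ) (t : ℂ) :
    S.X i j t * S.sg Y = S.sg ((1 + Matrix.single i j t) * Y * (1 - Matrix.single i j t)) * S.X i j t := by
  set e : Matrix (Fin n) (Fin n) ℂ := Matrix.single i j 1 with he
  have hee : e * e = 0 := Matrix.single_mul_single_of_ne _ _ _ _ hij.symm _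
  have het : ∀ t : ℂ, Matrix.single i j t = t • e := fun t => by simp [he, Matrix.smul_single]
  set a := S.sg Y
  set b := S.sg (e * Y - Y * e)
  set c := S.sg (e * Y * e)
  have h1 : S.d i j * a = b + a * S.d i j := by
    have := S.lie_sg hn hij Y; rw [Ring.lie_def] at this
    rw [← sub_eq_iff_eq_add]; exact this
  have h2 : S.d i j * b = (-2 : ℂ) • c + b * S.d i j := by
    have := S.lie_sg hn hij (e * Y - Y * e); rw [Ring.lie_def] at this
    rw [← sub_eq_iff_eq_add]
    refine this.trans ?_
    rw [← map_smul]; congr 1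
    rw [← he]
    simp only [mul_sub, sub_mul, ← mul_assoc, hee, zero_mul]
    rw [mul_assoc Y e e, hee]
    simp only [mul_zero]; module
  have h3 : S.d i j * c = c * S.d i j := by
    have := S.lie_sg hn hij (e * Y * e); rw [Ring.lie_def] at this
    rw [← sub_eq_zero]
    refine this.trans ?_
    rw [← he, mul_assoc (e * Y) e e, hee, mul_zero, ← mul_assoc, ← mul_assoc, hee]; simp
  have hZ : ∀ t : ℂ, S.sg ((1 + Matrix.single i j t) * Y * (1 - Matrix.single i j t)) = a + t • b - t ^ 2 • c := by
    intro t
    simp only [a, b, c]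
    rw [← map_smul, ← map_smul, ← map_add, ← map_sub, het]
    congr 1
    simp only [add_mul, mul_sub, mul_one, one_mul, smul_mul_assoc, mul_smul_comm, smul_sub, smul_add]
    module
  have hder : ∀ s : ℂ, HasDerivAt (fun t => S.X i j (-t) * (a + t • b - t ^ 2 • c) * S.X i j t) 0 s := by
    intro s
    have d1 : HasDerivAt (fun t => S.X i j (-t)) (-(S.d i j * S.X i j (-s))) s := by
      have := HasDerivAt.scomp s (S.hasDeriv i j (-s)) (hasDerivAt_neg s)
      simpa [Function.comp_def] using this
    have d2 : HasDerivAt (fun t : ℂ => a + t • b - t ^ 2 • c) (b - (2 * s) • c) s := by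
      have := (((hasDerivAt_id s).smul_const b).const_add a).sub ((hasDerivAt_pow 2 s).smul_const c)
      simp only [one_smul, id] at this
      refine HasDerivAt.congr_deriv this ?_
      simp
    have d3 := (d1.mul d2).mul (S.hasDeriv i j s)
    refine HasDerivAt.congr_deriv d3 ?_
    simp only [Pi.mul_apply]
    rw [S.d_comm_X i j (-s), ← mul_assoc (S.X i j (-s) * (a + s • b - s ^ 2 • c))]
    rw [← add_mul]
    apply mul_eq_zero_of_left
    rw [mul_assoc (S.X i j (-s)) _ (S.d i j), _root_.neg_mul, mul_assoc (S.X i j (-s)) (S.d i j), ← _root_.mul_neg, ← mul_add, ← mul_add]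
    apply mul_eq_zero_of_right
    simp only [mul_add, mul_sub, add_mul, sub_mul, mul_smul_comm, smul_mul_assoc, h1, h2, h3]
    module
  have hconst := is_const_of_deriv_eq_zero (fun s => (hder s).differentiableAt) (fun s => (hder s).deriv) t 0
  simp only [neg_zero, S.zero, one_mul, mul_one, zero_smul, add_zero, ne_eq, OfNat.ofNat_ne_zero,
    not_false_eq_true, zero_pow, sub_zero] at hconst
  rw [hZ]
  conv_lhs => rw [← hconst]
  rw [← mul_assoc, ← mul_assoc, S.mul_neg, one_mul]

end Sys
end SLX

namespace SLX

abbrev Ix (n : ℕ) := {p : Fin n × Fin n // p.1 ≠ p.2}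

/-- value of a word in SL -/
def piW {n : ℕ} {R : Type*} [CommRing R] (w : List (Ix n × R)) : Matrix.SpecialLinearGroup (Fin n) R :=
  (w.map fun x => el x.1.1.1 x.1.1.2 x.2).prod

def mapW {n : ℕ} {R R' : Type*} (f : R → R') (w : List (Ix n × R)) : List (Ix n × R') :=
  w.map fun x => (x.1, f x.2)

section words
variable {n : ℕ} {R : Type*} [CommRing R]

@[simp] lemma piW_nil : piW ([] : List (Ix n × R)) = 1 := rfl
@[simp] lemma piW_cons (x : Ix n × R) (w) : piW (x :: w) = el x.1.1.1 x.1.1.2 x.2 * piW w := by simp [piW]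
@[simp] lemma piW_append (w w' : List (Ix n × R)) : piW (w ++ w') = piW w * piW w' := by simp [piW]
@[simp] lemma mapW_nil {R R' : Type*} (f : R → R') : mapW (n := n) f [] = [] := rfl
@[simp] lemma mapW_cons {R R' : Type*} (f : R → R') (x : Ix n × R) (w) : mapW f (x :: w) = (x.1, f x.2) :: mapW f w := rfl
@[simp] lemma mapW_append {R R' : Type*} (f : R → R') (w w' : List (Ix n × R)) :
    mapW f (w ++ w') = mapW f w ++ mapW f w' := by simp [mapW]
lemma mapW_mapW {R R' R'' : Type*} (f : R → R') (g : R' → R'') (w : List (Ix n × R)) :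
    mapW g (mapW f w) = mapW (fun x => g (f x)) w := by simp [mapW]

lemma piW_map {R' : Type*} [CommRing R'] (f : R →+* R') (w : List (Ix n × R)) :
    piW (mapW f w) = Matrix.SpecialLinearGroup.map f (piW w) := by
  induction w with
  | nil => simp
  | cons x w ih => simp [ih, el_map]

def invW (w : List (Ix n × R)) : List (Ix n × R) := (mapW (fun t => -t) w).reverse

lemma invW_cons (x : Ix n × R) (w) : invW (x :: w) = invW w ++ [(x.1, -x.2)] := by simp [invW]

lemma piW_inv (w : List (Ix n × R)) : piW (invW w) = (piW w)⁻¹ := by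
  induction w with
  | nil => simp [invW]
  | cons x w ih => rw [invW_cons]; simp [ih, el_inv]

lemma piW_surj {K : Type*} [Field K] (g : Matrix.SpecialLinearGroup (Fin n) K) :
    ∃ w : List (Ix n × K), piW w = g := by
  let H : Subgroup (Matrix.SpecialLinearGroup (Fin n) K) :=
    { carrier := {g | ∃ w : List (Ix n × K), piW w = g}
      mul_mem' := by
        rintro _ _ ⟨w, rfl⟩ ⟨w', rfl⟩; exact ⟨w ++ w', by simp⟩
      one_mem' := ⟨[], by simp⟩
      inv_mem' := by
        rintro _ ⟨w, rfl⟩; exact ⟨invW w, by simp [piW_inv]⟩ }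
  have hH : H = ⊤ := field_gen_top H (fun k l t h => ⟨[(⟨(k, l), h⟩, t)], by simp⟩)
  have : g ∈ H := by rw [hH]; trivial
  exact this
end words

namespace Sys
variable {n : ℕ} {A : Type*} [NormedRing A] [NormedAlgebra ℂ A] (S : Sys n A)

def F (w : List (Ix n × ℂ)) : A := (w.map fun x => S.X x.1.1.1 x.1.1.2 x.2).prod

@[simp] lemma F_nil : S.F [] = 1 := rfl
@[simp] lemma F_cons (x : Ix n × ℂ) (w) : S.F (x :: w) = S.X x.1.1.1 x.1.1.2 x.2 * S.F w := by simp [F]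
@[simp] lemma F_append (w w' : List (Ix n × ℂ)) : S.F (w ++ w') = S.F w * S.F w' := by simp [F]

lemma F_inv_mul (w : List (Ix n × ℂ)) : S.F (invW w) * S.F w = 1 := by
  induction w with
  | nil => simp [invW]
  | cons x w ih =>
    rw [invW_cons]
    simp only [F_append, F_cons, F_nil, mul_one]
    rw [mul_assoc, ← mul_assoc (S.X _ _ (-x.2)), S.neg_mul, one_mul, ih]

lemma F_mul_inv (w : List (Ix n × ℂ)) : S.F w * S.F (invW w) = 1 := by
  induction w with
  | nil => simp [invW]
  | cons x w ih =>
    rw [invW_cons]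
    simp only [F_append, F_cons, F_nil, mul_one]
    rw [mul_assoc, ← mul_assoc (S.F w), ih, one_mul, S.mul_neg]

lemma F_zero (w : List (Ix n × ℂ)) : S.F (mapW (fun _ => (0:ℂ)) w) = 1 := by
  induction w with
  | nil => simp
  | cons x w ih => simp [ih, S.zero]

lemma word_deriv (hn : 3 ≤ n) (w : List (Ix n × (ℂ → ℂ))) (z : ℂ)
    (hw : ∀ x ∈ w, DifferentiableAt ℂ x.2 z) :
    ∃ Θ : Matrix (Fin n) (Fin n) ℂ,
      HasDerivAt (fun z => S.F (mapW (fun f => f z) w)) (S.sg Θ * S.F (mapW (fun f => f z) w)) z ∧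
      ∀ a b, HasDerivAt (fun z => piW (mapW (fun f => f z) w) a b)
        ((Θ * (piW (mapW (fun f => f z) w) : Matrix (Fin n) (Fin n) ℂ)) a b) z := by
  induction w with
  | nil =>
    refine ⟨0, ?_, fun a b => ?_⟩
    · simpa using hasDerivAt_const z (1 : A)
    · simpa using hasDerivAt_const z ((1 : Matrix (Fin n) (Fin n) ℂ) a b)
  | cons x w ih =>
    obtain ⟨Θ, h1, h2⟩ := ih (fun y hy => hw y (List.mem_cons_of_mem _ hy))
    obtain ⟨⟨⟨i, j⟩, hij⟩, f⟩ := x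
    simp only at hij
    have hf := (hw _ List.mem_cons_self).hasDerivAt
    simp only at hf
    set f' := deriv f z
    set P : Matrix (Fin n) (Fin n) ℂ := (piW (mapW (fun f => f z) w) : Matrix (Fin n) (Fin n) ℂ) with hP
    refine ⟨Matrix.single i j f' + (1 + Matrix.single i j (f z)) * Θ * (1 - Matrix.single i j (f z)), ?_, ?_⟩
    · have hX : HasDerivAt (fun z => S.X i j (f z)) (f' • (S.d i j * S.X i j (f z))) z :=
        HasDerivAt.scomp z (S.hasDeriv i j (f z)) hf
      have h3 := hX.mul h1
      simp only [mapW_cons, F_cons]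
      refine HasDerivAt.congr_deriv h3 ?_
      rw [map_add, sg_single, S.E_ne hij, add_mul]
      congr 1
      · simp only [smul_mul_assoc, mul_assoc]
      · rw [← mul_assoc, ← mul_assoc, S.conj_sg hn hij]
    · intro a b
      simp only [mapW_cons, piW_cons, el_mul_apply hij]
      have e0 : (single i j (f z) : Matrix (Fin n) (Fin n) ℂ) * single i j (f z) = 0 :=
        Matrix.single_mul_single_of_ne _ _ _ _ hij.symm _
      have e0' : (single i j f' : Matrix (Fin n) (Fin n) ℂ) * single i j (f z) = 0 :=
        Matrix.single_mul_single_of_ne _ _ _ _ hij.symm _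
      have e1 : (Matrix.single i j f' + (1 + Matrix.single i j (f z)) * Θ * (1 - Matrix.single i j (f z))) *
          ((el i j (f z) * piW (mapW (fun f => f z) w) : Matrix.SpecialLinearGroup (Fin n) ℂ) : Matrix (Fin n) (Fin n) ℂ)
          = Matrix.single i j f' * P + (Θ * P + Matrix.single i j (f z) * (Θ * P)) := by
        rw [Matrix.SpecialLinearGroup.coe_mul, el_coe hij, ← hP, ← mul_assoc, add_mul _ _ (1 + _), mul_add, e0',
          mul_assoc (_ * Θ)]
        have : (1 - single i j (f z)) * (1 + single i j (f z) : Matrix (Fin n) (Fin n) ℂ) = 1 := by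
          simp only [sub_mul, mul_add, e0]; simp
        rw [this]
        noncomm_ring
      rw [e1]
      simp only [Matrix.add_apply]
      by_cases ha : a = i
      · subst ha
        simp only [if_true, Matrix.single_mul_apply_same]
        have := (h2 a b).add (hf.mul (h2 j b))
        refine HasDerivAt.congr_deriv this ?_
        rw [← hP]; ring
      · simp only [ha, if_false, add_zero, Matrix.single_mul_apply_of_ne _ _ _ _ _ ha, zero_add]
        exact h2 a b

lemma word_const (hn : 3 ≤ n) (w : List (Ix n × (ℂ → ℂ))) (U : Set ℂ) (hU : IsOpen U) (hc : IsPreconnected U)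
    (hw : ∀ x ∈ w, ∀ z ∈ U, DifferentiableAt ℂ x.2 z)
    (hpi : ∀ z ∈ U, piW (mapW (fun f => f z) w) = 1) {z z' : ℂ} (hz : z ∈ U) (hz' : z' ∈ U) :
    S.F (mapW (fun f => f z) w) = S.F (mapW (fun f => f z') w) := by
  have key : ∀ z ∈ U, HasDerivAt (fun z => S.F (mapW (fun f => f z) w)) 0 z := by
    intro z hz
    obtain ⟨Θ, h1, h2⟩ := S.word_deriv hn w z (fun x hx => hw x hx z hz)
    have : Θ = 0 := by
      ext a b
      have h3 := h2 a b
      rw [hpi z hz] at h3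
      have h4 : HasDerivAt (fun z => piW (mapW (fun f => f z) w) a b) 0 z := by
        refine (hasDerivAt_const z ((1 : Matrix (Fin n) (Fin n) ℂ) a b)).congr_of_eventuallyEq ?_
        filter_upwards [hU.mem_nhds hz] with y hy
        rw [hpi y hy]; simp
      have := h3.unique h4
      simpa using this
    rw [this, map_zero, zero_mul] at h1
    exact h1
  exact hU.is_const_of_deriv_eq_zero hc (fun z hz => (key z hz).differentiableAt.differentiableWithinAt)
    (fun z hz => (key z hz).deriv) hz hz'

end Sys

lemma ratsec {n : ℕ} (hn : 1 ≤ n) : ∃ (w : List (Ix n × MvPolynomial (Fin n × Fin n) ℂ))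
    (Q : MvPolynomial (Fin n × Fin n) ℂ) (h : Matrix.SpecialLinearGroup (Fin n) ℂ),
    MvPolynomial.eval (fun q => h q.1 q.2) Q ≠ 0 ∧
    ∀ g : Matrix.SpecialLinearGroup (Fin n) ℂ, MvPolynomial.eval (fun q => g q.1 q.2) Q ≠ 0 →
      piW (mapW (fun P => MvPolynomial.eval (fun q => g q.1 q.2) P / MvPolynomial.eval (fun q => g q.1 q.2) Q) w) = g := by
  classical
  let R := MvPolynomial (Fin n × Fin n) ℂ
  let K := FractionRing R
  let o : Fin n := ⟨0, hn⟩
  let M : Matrix (Fin n) (Fin n) R := Matrix.mvPolynomialX (Fin n) (Fin n) ℂ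
  have hD : M.det ≠ 0 := Matrix.det_mvPolynomialX_ne_zero (Fin n) ℂ
  let D : K := algebraMap R K M.det
  have hDK : D ≠ 0 := by
    intro h; exact hD ((map_eq_zero_iff _ (IsFractionRing.injective R K)).1 h)
  let dg : Fin n → K := Function.update 1 o D⁻¹
  let MK : Matrix.SpecialLinearGroup (Fin n) K := ⟨M.map (algebraMap R K) * Matrix.diagonal dg, by
    rw [Matrix.det_mul, Matrix.det_diagonal]
    have : (M.map (algebraMap R K)).det = D := by
      rw [← RingHom.mapMatrix_apply, ← RingHom.map_det]
    rw [this, Finset.prod_update_of_mem (Finset.mem_univ o)]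
    simp
    exact mul_inv_cancel₀ hDK⟩
  obtain ⟨r, hr⟩ := piW_surj MK
  obtain ⟨b, hb⟩ := IsLocalization.exist_integer_multiples_of_finset (nonZeroDivisors R)
    ((r.map Prod.snd).toFinset : Finset K)
  have hb0 : (b : R) ≠ 0 := nonZeroDivisors.ne_zero b.2
  have hbK : algebraMap R K b ≠ 0 := by
    intro h; exact hb0 ((map_eq_zero_iff _ (IsFractionRing.injective R K)).1 h)
  let num : K → R := fun x => if h : ∃ y : R, algebraMap R K y = algebraMap R K b * x then h.choose else 0
  have hnum : ∀ x ∈ r, algebraMap R K (num x.2) = algebraMap R K b * x.2 := by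
    intro x hx
    have h : ∃ y : R, algebraMap R K y = algebraMap R K b * x.2 := by
      obtain ⟨y, hy⟩ := hb x.2 (List.mem_toFinset.2 (List.mem_map.2 ⟨x, hx, rfl⟩))
      exact ⟨y, by rw [hy, Algebra.smul_def]⟩
    simp only [num, dif_pos h]
    exact h.choose_spec
  let L := Localization.Away (b : R)
  let ι : L →+* K := IsLocalization.Away.lift (b : R) (g := algebraMap R K) (isUnit_iff_ne_zero.2 hbK)
  have hι : ∀ x, ι (algebraMap R L x) = algebraMap R K x := fun x => IsLocalization.Away.lift_eq _ _ _
  have hιinj : Function.Injective ι := by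
    have hRL : Function.Injective (algebraMap R L) := IsLocalization.injective L
      (M := Submonoid.powers (b : R)) (powers_le_nonZeroDivisors_of_noZeroDivisors hb0)
    apply (IsLocalization.lift_injective_iff (M := Submonoid.powers (b : R)) (S := L) _).2
    intro x y
    rw [hRL.eq_iff, (IsFractionRing.injective R K).eq_iff]
  have hbinv : ι (IsLocalization.Away.invSelf (b : R)) = (algebraMap R K b)⁻¹ := by
    apply eq_inv_of_mul_eq_one_left; rw [← hι, ← map_mul, mul_comm, IsLocalization.Away.mul_invSelf, map_one]
  let wL : List (Ix n × L) := mapW (fun x => algebraMap R L (num x) * IsLocalization.Away.invSelf (b : R)) r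
  have hwL : mapW ι wL = r := by
    simp only [wL, mapW_mapW]
    unfold mapW
    conv_rhs => rw [← List.map_id r]
    apply List.map_congr_left
    intro x hx
    simp only [map_mul, hι, hbinv, hnum x hx, id]
    refine Prod.ext rfl ?_
    show algebraMap R K b * x.2 * (algebraMap R K b)⁻¹ = x.2
    rw [mul_comm, ← mul_assoc, inv_mul_cancel₀ hbK, one_mul]
  have hent : ∀ a c, ι (piW wL a c) = algebraMap R K (M a c) * dg c := by
    intro a c
    have h1 := piW_map ι wL
    rw [hwL, hr] at h1
    have h2 := congrArg (fun g : Matrix.SpecialLinearGroup (Fin n) K => g a c) h1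
    simp only [Matrix.SpecialLinearGroup.map_apply_coe] at h2
    refine h2.symm.trans ?_
    show (M.map (algebraMap R K) * Matrix.diagonal dg : Matrix (Fin n) (Fin n) K) a c = _
    rw [Matrix.mul_diagonal, Matrix.map_apply]
  -- specialization
  have spec : ∀ p : Fin n × Fin n → ℂ, MvPolynomial.eval p (b : R) ≠ 0 → ∀ a c,
      (piW (mapW (fun P => MvPolynomial.eval p P / MvPolynomial.eval p (b : R)) (mapW num r))) a c *
        (if c = o then (Matrix.of fun i j => p (i, j)).det else 1) = p (a, c) := by
    intro p hp a c
    let ev : L →+* ℂ := IsLocalization.Away.lift (b : R) (g := MvPolynomial.eval p) (isUnit_iff_ne_zero.2 hp)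
    have hev : ∀ x, ev (algebraMap R L x) = MvPolynomial.eval p x := fun x => IsLocalization.Away.lift_eq _ _ _
    have hevb : ev (IsLocalization.Away.invSelf (b : R)) = (MvPolynomial.eval p (b : R))⁻¹ := by
      apply eq_inv_of_mul_eq_one_left; rw [← hev, ← map_mul, mul_comm, IsLocalization.Away.mul_invSelf, map_one]
    have h1 : mapW (fun P => MvPolynomial.eval p P / MvPolynomial.eval p (b : R)) (mapW num r) = mapW ev wL := by
      simp only [wL, mapW_mapW, map_mul, hev, hevb, div_eq_mul_inv]
    rw [h1, piW_map, Matrix.SpecialLinearGroup.map_apply_coe]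
    have hdet : (Matrix.of fun i j => p (i, j)).det = ev (algebraMap R L M.det) := by
      rw [hev, RingHom.map_det]
      congr 1
      ext i j
      simp [M]
    have hpac : p (a, c) = ev (algebraMap R L (M a c)) := by rw [hev]; simp [M]
    have h3 : piW wL a c * (if c = o then algebraMap R L M.det else 1) = algebraMap R L (M a c) := by
      apply hιinj
      rw [map_mul, hent, hι]
      by_cases hc : c = o
      · subst hc
        simp only [dg, Function.update_self, if_true, hι]
        rw [mul_assoc, inv_mul_cancel₀ hDK, mul_one]
      · simp [dg, hc]
    rw [hpac, ← h3, map_mul, hdet]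
    by_cases hc : c = o
    · simp [hc]
    · simp [hc]
  -- good point
  have hbD : (b : R) * M.det ≠ 0 := mul_ne_zero hb0 hD
  obtain ⟨p1, hp1⟩ : ∃ p : Fin n × Fin n → ℂ, MvPolynomial.eval p ((b : R) * M.det) ≠ 0 := by
    by_contra hcon
    push Not at hcon
    exact hbD (MvPolynomial.funext (fun x => by rw [hcon x, map_zero]))
  rw [map_mul] at hp1
  let d : ℂ := (Matrix.of fun i j => p1 (i, j)).det
  have hd : d ≠ 0 := by
    have : MvPolynomial.eval p1 M.det = d := by
      rw [RingHom.map_det]; congr 1; ext i j; simp [M]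
    rw [← this]; exact right_ne_zero_of_mul hp1
  -- substitution g -> g diag(d,1,..,1)
  let sub : Fin n × Fin n → R := fun q => MvPolynomial.X q * MvPolynomial.C (if q.2 = o then d else 1)
  let pt : (Fin n × Fin n → ℂ) → (Fin n × Fin n → ℂ) := fun p q => p q * (if q.2 = o then d else 1)
  have hsub : ∀ (p : Fin n × Fin n → ℂ) (P : R), MvPolynomial.eval p (MvPolynomial.bind₁ sub P) = MvPolynomial.eval (pt p) P := by
    intro p P
    rw [MvPolynomial.eval, MvPolynomial.eval₂Hom_bind₁]
    congr 2
    funext q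
    simp [sub, pt]
  have hptdet : ∀ p : Fin n × Fin n → ℂ, (Matrix.of fun i j => pt p (i, j)).det = (Matrix.of fun i j => p (i, j)).det * d := by
    intro p
    have : (Matrix.of fun i j => pt p (i, j)) = (Matrix.of fun i j => p (i, j)) * Matrix.diagonal (Function.update 1 o d) := by
      ext i j
      simp [pt, Matrix.mul_diagonal, Function.update_apply]
    rw [this, Matrix.det_mul, Matrix.det_diagonal, Finset.prod_update_of_mem (Finset.mem_univ o)]
    simp
  refine ⟨mapW (MvPolynomial.bind₁ sub) (mapW num r), MvPolynomial.bind₁ sub b,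
    ⟨(Matrix.of fun i j => p1 (i, j)) * Matrix.diagonal (Function.update 1 o d⁻¹), ?_⟩, ?_, ?_⟩
  · rw [Matrix.det_mul, Matrix.det_diagonal, Finset.prod_update_of_mem (Finset.mem_univ o)]
    simp [d, mul_inv_cancel₀ hd]
  · rw [hsub]
    have : pt (fun q => (((Matrix.of fun i j => p1 (i, j)) * Matrix.diagonal (Function.update 1 o d⁻¹) : Matrix (Fin n) (Fin n) ℂ)) q.1 q.2) = p1 := by
      funext q
      simp only [pt, Matrix.mul_diagonal, Function.update_apply]
      split_ifs <;> simp [hd]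
    simp only
    rw [this]
    exact left_ne_zero_of_mul hp1
  · intro g hg
    rw [hsub] at hg
    have hs := spec _ hg
    have hgd : (Matrix.of fun i j => (fun q : Fin n × Fin n => g q.1 q.2) (i, j)).det = 1 := g.det_coe
    simp only [mapW_mapW, hsub] at hs ⊢
    have hdet := hptdet (fun q => g q.1 q.2)
    rw [hgd, one_mul] at hdet
    ext a c
    have := hs a c
    rw [hdet] at this
    have hpt : pt (fun q => g q.1 q.2) (a, c) = g a c * (if c = o then d else 1) := rfl
    rw [hpt] at this
    refine mul_right_cancel₀ ?_ this
    split_ifs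
    · exact hd
    · exact one_ne_zero

end SLX

namespace SLX

section
variable {n : ℕ}

lemma mapW_invW {R R' : Type*} [CommRing R] [CommRing R'] (f : R →+* R') (w : List (Ix n × R)) :
    mapW f (invW w) = invW (mapW f w) := by
  induction w with
  | nil => simp [invW]
  | cons x w ih => rw [invW_cons, mapW_cons, invW_cons]; simp [ih]

lemma eval_poly_mv {σ : Type*} (f : σ → Polynomial ℂ) (P : MvPolynomial σ ℂ) (z : ℂ) :
    Polynomial.eval z (MvPolynomial.aeval f P) = MvPolynomial.eval (fun q => Polynomial.eval z (f q)) P := by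
  induction P using MvPolynomial.induction_on with
  | C a => simp
  | add p q hp hq => simp [hp, hq]
  | mul_X p i hp => simp [hp]

variable {A : Type*} [NormedRing A] [NormedAlgebra ℂ A] (S : Sys n A)

lemma Sys.well (hn : 3 ≤ n) (W : List (Ix n × ℂ)) (hW : piW W = 1) : S.F W = 1 := by
  obtain ⟨w, Q, h, hQ, hsec⟩ := ratsec (n := n) (by omega)
  obtain ⟨wh, hwh⟩ := piW_surj h
  let Wp : List (Ix n × Polynomial ℂ) := mapW (fun t => Polynomial.X * Polynomial.C t) W
  let Gp : Matrix.SpecialLinearGroup (Fin n) (Polynomial ℂ) := piW Wp * Matrix.SpecialLinearGroup.map Polynomial.C h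
  let f : Fin n × Fin n → Polynomial ℂ := fun q => Gp q.1 q.2
  let ev : ℂ → Polynomial ℂ →+* ℂ := fun z => Polynomial.evalRingHom z
  let G : ℂ → Matrix.SpecialLinearGroup (Fin n) ℂ := fun z => Matrix.SpecialLinearGroup.map (ev z) Gp
  have hGf : ∀ z (P : MvPolynomial (Fin n × Fin n) ℂ),
      MvPolynomial.eval (fun q => G z q.1 q.2) P = Polynomial.eval z (MvPolynomial.aeval f P) := by
    intro z P
    rw [eval_poly_mv]
    rfl
  have hG : ∀ z, G z = piW (mapW (fun t => z * t) W) * h := by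
    intro z
    simp only [G, Gp, map_mul]
    congr 1
    · rw [← piW_map]
      simp only [Wp, mapW_mapW]
      congr 1
      refine congrArg (fun f => mapW f W) (funext fun t => ?_)
      show Polynomial.eval z (Polynomial.X * Polynomial.C t) = z * t
      rw [Polynomial.eval_mul, Polynomial.eval_X, Polynomial.eval_C]
    · ext a b
      simp [ev]
  have hG0 : G 0 = h := by
    rw [hG]
    have : ∀ w : List (Ix n × ℂ), piW (mapW (fun t => 0 * t) w) = 1 := by
      intro w
      induction w with
      | nil => simp
      | cons x w ih => rw [mapW_cons, piW_cons, ih, zero_mul, el_zero, one_mul]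
    rw [this, one_mul]
  have hG1 : G 1 = h := by
    rw [hG]
    have : mapW (fun t : ℂ => 1 * t) W = W := by simp only [one_mul]; exact List.map_id _
    rw [this, hW, one_mul]
  let q : Polynomial ℂ := MvPolynomial.aeval f Q
  have hq0 : Polynomial.eval 0 q ≠ 0 := by rw [← hGf, hG0]; exact hQ
  have hq1 : Polynomial.eval 1 q ≠ 0 := by rw [← hGf, hG1]; exact hQ
  have hqne : q ≠ 0 := by rintro h0; rw [h0] at hq0; simp at hq0
  let U : Set ℂ := {z | Polynomial.eval z q = 0}ᶜ
  have hfin : {z | Polynomial.eval z q = 0}.Finite := by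
    refine (q.roots.toFinset.finite_toSet).subset ?_
    intro z hz
    simp only [Finset.mem_coe, Multiset.mem_toFinset, Polynomial.mem_roots hqne]
    exact hz
  have hU : IsOpen U := hfin.isClosed.isOpen_compl
  have hUc : IsPreconnected U := by
    refine (Set.Countable.isPathConnected_compl_of_one_lt_rank (E := ℂ) ?_ hfin.countable).isConnected.isPreconnected
    rw [Complex.rank_real_complex]; norm_num
  let W1 : List (Ix n × (ℂ → ℂ)) := mapW (fun t => fun z => z * t) W
  let W2 : List (Ix n × (ℂ → ℂ)) := mapW (fun t => fun _ => t) wh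
  let W3 : List (Ix n × (ℂ → ℂ)) := mapW (fun P => fun z => Polynomial.eval z (MvPolynomial.aeval f P) / Polynomial.eval z q) w
  let V : List (Ix n × (ℂ → ℂ)) := W1 ++ W2 ++ invW W3
  have hV : ∀ z, mapW (fun f => f z) V = mapW (fun t => z * t) W ++ wh ++
      invW (mapW (fun P => MvPolynomial.eval (fun q => G z q.1 q.2) P / MvPolynomial.eval (fun q => G z q.1 q.2) Q) w) := by
    intro z
    simp only [V, mapW_append]
    congr 1
    · congr 1
      · simp [W1, mapW_mapW]
      · simp only [W2, mapW_mapW]; exact List.map_id _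
    · have := mapW_invW (n := n) (Pi.evalRingHom (fun _ : ℂ => ℂ) z) W3
      refine this.trans ?_
      simp only [W3, mapW_mapW, hGf]
      rfl
  have hd1 : ∀ P : Polynomial ℂ, Differentiable ℂ (fun z => Polynomial.eval z P) := fun P => P.differentiable
  have hdV : ∀ x ∈ V, ∀ z ∈ U, DifferentiableAt ℂ x.2 z := by
    intro x hx z hz
    simp only [V, List.mem_append] at hx
    rcases hx with (hx | hx) | hx
    · simp only [W1, mapW, List.mem_map] at hx
      obtain ⟨y, -, rfl⟩ := hx
      fun_prop
    · simp only [W2, mapW, List.mem_map] at hx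
      obtain ⟨y, -, rfl⟩ := hx
      fun_prop
    · simp only [invW, W3, mapW, List.mem_map, List.mem_reverse] at hx
      obtain ⟨y, ⟨y', -, rfl⟩, rfl⟩ := hx
      exact ((hd1 _ z).div (hd1 _ z) hz).neg
  have hpi : ∀ z ∈ U, piW (mapW (fun f => f z) V) = 1 := by
    intro z hz
    have hz' : MvPolynomial.eval (fun q => G z q.1 q.2) Q ≠ 0 := by rw [hGf]; exact hz
    rw [hV, piW_append, piW_append, piW_inv, hsec _ hz', hwh, hG, mul_inv_cancel]
  have key := S.word_const hn V U hU hUc hdV hpi (z := 1) (z' := 0) hq1 hq0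
  rw [hV, hV, hG0, hG1] at key
  simp only [Sys.F_append] at key
  have e0 : S.F (mapW (fun t => 0 * t) W) = 1 := by
    have := S.F_zero W
    simpa using this
  have e1 : mapW (fun t : ℂ => 1 * t) W = W := by simp only [one_mul]; exact List.map_id _
  rw [e0, e1, one_mul] at key
  set V3 := mapW (fun P => MvPolynomial.eval (fun q => h q.1 q.2) P / MvPolynomial.eval (fun q => h q.1 q.2) Q) w
  have := congrArg (fun y => y * S.F V3 * S.F (invW wh)) key
  simp only [mul_assoc] at this
  rw [← mul_assoc (S.F (invW V3)), S.F_inv_mul, one_mul, S.F_mul_inv, mul_one] at this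
  exact this

lemma Sys.exists_hom (hn : 3 ≤ n) : ∃ r : Matrix.SpecialLinearGroup (Fin n) ℂ →* A,
    ∀ w, r (piW w) = S.F w := by
  choose wd hwd using fun g : Matrix.SpecialLinearGroup (Fin n) ℂ => piW_surj g
  have key : ∀ w w', piW w = piW w' → S.F w = S.F w' := by
    intro w w' h
    have := S.well hn (w ++ invW w') (by rw [piW_append, piW_inv, h, mul_inv_cancel])
    rw [S.F_append] at this
    calc S.F w = S.F w * S.F (invW w') * S.F w' := by rw [mul_assoc, S.F_inv_mul, mul_one]
      _ = _ := by rw [this, one_mul]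
  refine ⟨{ toFun := fun g => S.F (wd g), map_one' := ?_, map_mul' := ?_ }, fun w => key _ _ (hwd _)⟩
  · rw [key (wd 1) [] (by simp [hwd])]; rfl
  · intro g g'
    rw [← S.F_append]
    apply key
    simp [hwd]

end
end SLX

namespace SLX

section
variable {n : ℕ}

/-- evaluation of polynomials on SL -/
noncomputable def evS (g : Matrix.SpecialLinearGroup (Fin n) ℂ) : MvPolynomial (Fin n × Fin n) ℂ →+* ℂ :=
  MvPolynomial.eval (fun q => g q.1 q.2)

def RatF (Q : MvPolynomial (Fin n × Fin n) ℂ) (f : Matrix.SpecialLinearGroup (Fin n) ℂ → ℂ) : Prop :=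
  ∃ (m : ℕ) (P : MvPolynomial (Fin n × Fin n) ℂ), ∀ g, evS g Q ≠ 0 → evS g Q ^ m * f g = evS g P

variable {Q : MvPolynomial (Fin n × Fin n) ℂ} {f f' : Matrix.SpecialLinearGroup (Fin n) ℂ → ℂ}

lemma RatF.const (c : ℂ) : RatF Q (fun _ => c) := ⟨0, MvPolynomial.C c, fun g _ => by simp [evS]⟩

lemma RatF.add (h : RatF Q f) (h' : RatF Q f') : RatF Q (fun g => f g + f' g) := by
  obtain ⟨m, P, hP⟩ := h
  obtain ⟨m', P', hP'⟩ := h'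
  refine ⟨m + m', Q ^ m' * P + Q ^ m * P', fun g hg => ?_⟩
  rw [map_add, map_mul, map_mul, ← hP g hg, ← hP' g hg, map_pow, map_pow, pow_add]
  ring

lemma RatF.mul (h : RatF Q f) (h' : RatF Q f') : RatF Q (fun g => f g * f' g) := by
  obtain ⟨m, P, hP⟩ := h
  obtain ⟨m', P', hP'⟩ := h'
  refine ⟨m + m', P * P', fun g hg => ?_⟩
  rw [map_mul, ← hP g hg, ← hP' g hg, pow_add]
  ring

lemma RatF.sum {ι : Type*} (s : Finset ι) (F : ι → Matrix.SpecialLinearGroup (Fin n) ℂ → ℂ)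
    (h : ∀ i ∈ s, RatF Q (F i)) : RatF Q (fun g => ∑ i ∈ s, F i g) := by
  classical
  induction s using Finset.induction_on with
  | empty => simpa using RatF.const 0
  | insert a s ha ih =>
    simp only [Finset.sum_insert ha]
    exact (h a (Finset.mem_insert_self _ _)).add (ih fun i hi => h i (Finset.mem_insert_of_mem hi))

lemma RatF.poly (h : RatF Q f) (p : Polynomial ℂ) : RatF Q (fun g => p.eval (f g)) := by
  induction p using Polynomial.induction_on' with
  | add p q hp hq => simpa using hp.add hq
  | monomial k a =>
    simp only [Polynomial.eval_monomial]
    have : ∀ k : ℕ, RatF Q (fun g => a * f g ^ k) := by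
      intro k
      induction k with
      | zero => simpa using RatF.const a
      | succ k ih =>
        have := ih.mul h
        simpa only [pow_succ, ← mul_assoc] using this
    exact this k

lemma RatF.quot (P : MvPolynomial (Fin n × Fin n) ℂ) : RatF Q (fun g => evS g P / evS g Q) :=
  ⟨1, P, fun g hg => by rw [pow_one, mul_div_cancel₀ _ hg]⟩

lemma algebraic_of_poly {N : ℕ} (hn : 1 ≤ n) (r : Matrix.SpecialLinearGroup (Fin n) ℂ →* Matrix (Fin N) (Fin N) ℂ)
    (hr : ∀ i j, i ≠ j → ∀ a b, ∃ p : Polynomial ℂ, ∀ t, r (el i j t) a b = p.eval t) (a b : Fin N) :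
    ∃ P : MvPolynomial (Fin n × Fin n) ℂ, ∀ g, r g a b = evS g P := by
  obtain ⟨w, Q, h, hQ, hsec⟩ := ratsec (n := n) hn
  have h1 : ∀ (w : List (Ix n × MvPolynomial (Fin n × Fin n) ℂ)) a b,
      RatF Q (fun g => r (piW (mapW (fun P => evS g P / evS g Q) w)) a b) := by
    intro w
    induction w with
    | nil => intro a b; simpa using RatF.const _
    | cons x w ih =>
      intro a b
      simp only [mapW_cons, piW_cons, map_mul, Matrix.mul_apply]
      refine RatF.sum _ _ fun k _ => RatF.mul ?_ (ih k b)
      obtain ⟨p, hp⟩ := hr x.1.1.1 x.1.1.2 x.1.2 a k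
      simp only [hp]
      exact (RatF.quot x.2).poly p
  have h2 : ∀ a b, RatF Q (fun g => r g a b) := by
    intro a b
    obtain ⟨m, P, hP⟩ := h1 w a b
    refine ⟨m, P, fun g hg => ?_⟩
    rw [← hP g hg]
    congr 3
    exact (hsec g hg).symm
  let J : Ideal (MvPolynomial (Fin n × Fin n) ℂ) :=
    { carrier := {c | ∃ P, ∀ g, evS g c * r g a b = evS g P}
      add_mem' := by
        rintro x y ⟨P, hP⟩ ⟨P', hP'⟩
        exact ⟨P + P', fun g => by rw [map_add, add_mul, hP, hP', map_add]⟩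
      zero_mem' := ⟨0, fun g => by simp⟩
      smul_mem' := by
        rintro c x ⟨P, hP⟩
        exact ⟨c * P, fun g => by rw [smul_eq_mul, map_mul, mul_assoc, hP, map_mul]⟩ }
  have hz : MvPolynomial.zeroLocus ℂ J = ∅ := by
    rw [Set.eq_empty_iff_forall_notMem]
    intro x hx
    rw [MvPolynomial.mem_zeroLocus_iff] at hx
    let M : Matrix (Fin n) (Fin n) ℂ := Matrix.of fun i j => x (i, j)
    by_cases hM : M.det = 1
    · let g0 : Matrix.SpecialLinearGroup (Fin n) ℂ := ⟨M, hM⟩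
      let u := h * g0⁻¹
      have h3 : RatF Q (fun g => r (u⁻¹ * g) a b) := by
        simp only [map_mul, Matrix.mul_apply]
        exact RatF.sum _ _ fun k _ => RatF.mul (RatF.const _) (h2 k b)
      obtain ⟨m, P, hP⟩ := h3
      let sb : Fin n × Fin n → MvPolynomial (Fin n × Fin n) ℂ := fun q =>
        ∑ k, MvPolynomial.C (u q.1 k) * MvPolynomial.X (k, q.2)
      have hsb : ∀ g P, evS g (MvPolynomial.bind₁ sb P) = evS (u * g) P := by
        intro g P
        unfold evS
        rw [MvPolynomial.eval, MvPolynomial.eval₂Hom_bind₁]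
        congr 2
        funext q
        simp [sb, Matrix.mul_apply]
      have h4 : MvPolynomial.bind₁ sb Q ^ (m + 1) ∈ J := by
        refine ⟨MvPolynomial.bind₁ sb (Q * P), fun g => ?_⟩
        rw [map_pow, hsb, hsb, map_mul]
        by_cases h0 : evS (u * g) Q = 0
        · simp [h0]
        · rw [← hP _ h0]
          show _ = _ * (_ * r (u⁻¹ * (u * g)) a b)
          rw [inv_mul_cancel_left]; ring
      have h5 := hx _ h4
      have h6 : evS g0 (MvPolynomial.bind₁ sb Q ^ (m + 1)) = 0 := by
        rw [← h5]; rfl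
      rw [map_pow, hsb] at h6
      have h7 := pow_eq_zero_iff (by omega) |>.1 h6
      simp only [u, inv_mul_cancel_right] at h7
      exact hQ h7
    · have h4 : (Matrix.mvPolynomialX (Fin n) (Fin n) ℂ).det - 1 ∈ J := by
        refine ⟨0, fun g => ?_⟩
        have : evS g (Matrix.mvPolynomialX (Fin n) (Fin n) ℂ).det = 1 := by
          rw [← g.det_coe, RingHom.map_det]; congr 1; ext i j; simp [evS]
        rw [map_sub, this]; simp
      have h5 := hx _ h4
      apply hM
      rw [map_sub, map_one, sub_eq_zero] at h5
      rw [← h5, AlgHom.map_det]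
      congr 1; ext i j; simp [M]
  have hJ : J = ⊤ := by
    have := MvPolynomial.vanishingIdeal_zeroLocus_eq_radical (K := ℂ) J
    rw [hz] at this
    rw [← Ideal.radical_eq_top, ← this]
    exact MvPolynomial.vanishingIdeal_empty
  have : (1 : MvPolynomial (Fin n × Fin n) ℂ) ∈ J := by rw [hJ]; trivial
  obtain ⟨P, hP⟩ := this
  exact ⟨P, fun g => by rw [← hP g]; simp⟩

end
end SLX

namespace SLX

section
variable {N : ℕ}

def PolyF (f : ℂ → Matrix (Fin N) (Fin N) ℂ) : Prop := ∀ a b, ∃ p : Polynomial ℂ, ∀ t, f t a b = p.eval t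

lemma PolyF.const (M : Matrix (Fin N) (Fin N) ℂ) : PolyF (fun _ => M) := fun a b => ⟨Polynomial.C (M a b), by simp⟩

lemma PolyF.smul (p : Polynomial ℂ) (M : Matrix (Fin N) (Fin N) ℂ) : PolyF (fun t => p.eval t • M) :=
  fun a b => ⟨p * Polynomial.C (M a b), by simp⟩

lemma PolyF.sum {ι : Type*} (s : Finset ι) (F : ι → ℂ → Matrix (Fin N) (Fin N) ℂ) (h : ∀ i, PolyF (F i)) :
    PolyF (fun t => ∑ i ∈ s, F i t) := by
  intro a b
  choose p hp using fun i => h i a b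
  exact ⟨∑ i ∈ s, p i, fun t => by simp [Matrix.sum_apply, hp, Polynomial.eval_finsetSum]⟩

lemma PolyF.mul {f f' : ℂ → Matrix (Fin N) (Fin N) ℂ} (h : PolyF f) (h' : PolyF f') : PolyF (fun t => f t * f' t) := by
  intro a b
  choose p hp using h a
  choose p' hp' using fun k => h' k b
  exact ⟨∑ k, p k * p' k, fun t => by simp [Matrix.mul_apply, hp, hp', Polynomial.eval_finsetSum]⟩

lemma PolyF.comp {f : ℂ → Matrix (Fin N) (Fin N) ℂ} (h : PolyF f) (q : Polynomial ℂ) : PolyF (fun t => f (q.eval t)) := by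
  intro a b
  obtain ⟨p, hp⟩ := h a b
  exact ⟨p.comp q, fun t => by simp [hp]⟩

lemma PolyF.comp_add {f : ℂ → Matrix (Fin N) (Fin N) ℂ} (h : PolyF f) (c : ℂ) : PolyF (fun t => f (c + t)) := by
  intro a b
  obtain ⟨p, hp⟩ := h a b
  exact ⟨p.comp (Polynomial.C c + Polynomial.X), fun t => by simp [hp]⟩

lemma PolyF.comp_mul {f : ℂ → Matrix (Fin N) (Fin N) ℂ} (h : PolyF f) (c : ℂ) : PolyF (fun t => f (c * t)) := by
  intro a b
  obtain ⟨p, hp⟩ := h a b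
  exact ⟨p.comp (Polynomial.C c * Polynomial.X), fun t => by simp [hp]⟩

lemma PolyF.ext {f f' : ℂ → Matrix (Fin N) (Fin N) ℂ} (h : PolyF f) (h' : PolyF f') {c : ℂ} (hc : c ≠ 0)
    (e : ∀ k : ℕ, f (c * k) = f' (c * k)) (t : ℂ) : f t = f' t := by
  ext a b
  obtain ⟨p, hp⟩ := h a b
  obtain ⟨p', hp'⟩ := h' a b
  have : p = p' := by
    apply Polynomial.eq_of_infinite_eval_eq
    refine Set.Infinite.mono (s := Set.range fun k : ℕ => c * k) ?_ (Set.infinite_range_of_injective ?_)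
    · rintro _ ⟨k, rfl⟩
      simp only [Set.mem_setOf_eq]
      rw [← hp, ← hp', e]
    · intro k k' hk
      exact_mod_cast mul_left_cancel₀ hc hk
  rw [hp, hp', this]

lemma one_param (u : Matrix (Fin N) (Fin N) ℂ) (hu : IsNilpotent (u - 1)) :
    ∃ P : ℂ → Matrix (Fin N) (Fin N) ℂ, PolyF P ∧ ∀ k : ℕ, P k = u ^ k := by
  obtain ⟨m, hm⟩ := hu
  set z := u - 1 with hz
  refine ⟨fun t => ∑ k ∈ Finset.range m, ((Polynomial.C ((k.factorial : ℂ)⁻¹) * descPochhammer ℂ k).eval t) • z ^ k,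
    PolyF.sum _ _ fun k => PolyF.smul _ _, fun K => ?_⟩
  have hc : ∀ k : ℕ, ((Polynomial.C ((k.factorial : ℂ)⁻¹) * descPochhammer ℂ k).eval (K : ℂ)) = (K.choose k : ℂ) := by
    intro k
    rw [Polynomial.eval_mul, Polynomial.eval_C, descPochhammer_eval_eq_descFactorial, Nat.descFactorial_eq_factorial_mul_choose]
    push_cast
    rw [← mul_assoc, inv_mul_cancel₀ (by exact_mod_cast Nat.factorial_ne_zero k), one_mul]
  simp only [hc]
  have hu : u = z + 1 := by rw [hz]; abel
  have e1 : u ^ K = ∑ k ∈ Finset.range (K + 1), (K.choose k : ℂ) • z ^ k := by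
    rw [hu, (Commute.one_right z).add_pow]
    refine Finset.sum_congr rfl fun k _ => ?_
    rw [one_pow, mul_one, Nat.cast_smul_eq_nsmul, nsmul_eq_mul, Nat.cast_comm]
  rw [e1]
  have e2 : ∑ k ∈ Finset.range m, (K.choose k : ℂ) • z ^ k = ∑ k ∈ Finset.range (m + (K + 1)), (K.choose k : ℂ) • z ^ k := by
    refine Finset.sum_subset (by intro x; simp; omega) fun k _ hk => ?_
    simp only [Finset.mem_range, not_lt] at hk
    rw [pow_eq_zero_of_le hk hm, smul_zero]
  have e3 : ∑ k ∈ Finset.range (K + 1), (K.choose k : ℂ) • z ^ k = ∑ k ∈ Finset.range (m + (K + 1)), (K.choose k : ℂ) • z ^ k := by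
    refine Finset.sum_subset (by intro x; simp; omega) fun k _ hk => ?_
    simp only [Finset.mem_range, not_lt] at hk
    rw [Nat.choose_eq_zero_of_lt (by omega)]; simp
  rw [e2, e3]

end

section
open scoped Matrix.Norms.Operator

lemma PolyF.differentiable {N : ℕ} {f : ℂ → Matrix (Fin N) (Fin N) ℂ} (h : PolyF f) : Differentiable ℂ f := by
  choose p hp using h
  have : f = fun t => ∑ a, ∑ b, (p a b).eval t • (Matrix.single a b 1 : Matrix (Fin N) (Fin N) ℂ) := by
    funext t
    rw [Matrix.matrix_eq_sum_single (f t)]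
    simp [Matrix.smul_single, hp]
  rw [this]
  have hd : ∀ p : Polynomial ℂ, Differentiable ℂ fun t => p.eval t := fun p => p.differentiable
  refine Differentiable.fun_sum fun a _ => Differentiable.fun_sum fun b _ => ?_
  exact (hd _).smul_const _

lemma el_pow_nat {n : ℕ} (i j : Fin n) (t : ℤ) (k : ℕ) : el i j t ^ k = el i j (t * k) := by
  induction k with
  | zero => simp [el_zero]
  | succ k ih => rw [pow_succ, ih, ← el_add]; push_cast; ring_nf

lemma exists_alg {n N : ℕ} (hn : 5 ≤ n) (hdim : N < 2 ^ n - 2)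
    (ρ : Matrix.SpecialLinearGroup (Fin n) ℤ →* GL (Fin N) ℂ) :
    ∃ r : Matrix.SpecialLinearGroup (Fin n) ℂ →* Matrix (Fin N) (Fin N) ℂ,
      (∀ i j, i ≠ j → PolyF (fun t => r (el i j t))) ∧
      (∀ i j, i ≠ j → ∀ k : ℕ, r (el i j (2 * k : ℂ)) = (ρ (el i j (2 * k : ℤ)) : Matrix (Fin N) (Fin N) ℂ)) := by
  have h1 : ∀ i j, ∃ P : ℂ → Matrix (Fin N) (Fin N) ℂ, PolyF P ∧ ∀ k : ℕ, P k = (ρ (el i j 2) : Matrix (Fin N) (Fin N) ℂ) ^ k := by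
    intro i j
    apply one_param
    by_cases hij : i = j
    · subst hij
      have : el i i (2 : ℤ) = 1 := by simp [el]
      rw [this, map_one]; simp
    · exact unip hn hdim ρ hij
  choose P hP hPk using h1
  let X : Fin n → Fin n → ℂ → Matrix (Fin N) (Fin N) ℂ := fun i j t => P i j ((1/2) * t)
  have hX : ∀ i j, PolyF (X i j) := fun i j => (hP i j).comp_mul _
  have hXk : ∀ i j (k : ℕ), X i j (2 * k) = (ρ (el i j (2 * k : ℤ)) : Matrix (Fin N) (Fin N) ℂ) := by
    intro i j k
    simp only [X]
    rw [← mul_assoc]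
    norm_num
    rw [hPk, ← el_pow_nat, map_pow]
    simp
  have h2 : (2 : ℂ) ≠ 0 := two_ne_zero
  let S : Sys n (Matrix (Fin N) (Fin N) ℂ) :=
    { X := X
      diff := fun i j => (hX i j).differentiable
      zero := fun i j => by
        have := hXk i j 0
        simpa [el_zero] using this
      add := fun i j s t => by
        refine PolyF.ext (f := fun s => X i j (s + t)) (f' := fun s => X i j s * X i j t) ?_ ?_ h2 ?_ s
        · simpa only [add_comm t] using (hX i j).comp_add t
        · exact (hX i j).mul (PolyF.const _)
        intro k
        refine PolyF.ext (f := fun t => X i j (2 * k + t)) (f' := fun t => X i j (2 * k) * X i j t) ?_ ?_ h2 ?_ t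
        · exact (hX i j).comp_add _
        · exact (PolyF.const _).mul (hX i j)
        intro l
        show X i j (2 * k + 2 * l) = X i j (2 * k) * X i j (2 * l)
        have := hXk i j (k + l)
        push_cast at this
        rw [← mul_add, this, hXk, hXk, mul_add, el_add, map_mul]; rfl
      comm := fun i j k l s t hij hkl hjk hil => by
        refine PolyF.ext (f := fun s => X i j s * X k l t) (f' := fun s => X k l t * X i j s) ?_ ?_ h2 ?_ s
        · exact (hX i j).mul (PolyF.const _)
        · exact (PolyF.const _).mul (hX i j)
        intro p
        refine PolyF.ext (f := fun t => X i j (2 * p) * X k l t) (f' := fun t => X k l t * X i j (2 * p)) ?_ ?_ h2 ?_ t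
        · exact (PolyF.const _).mul (hX k l)
        · exact (hX k l).mul (PolyF.const _)
        intro q
        simp only [hXk]
        have := congrArg (fun x => (ρ x : Matrix (Fin N) (Fin N) ℂ)) (el_comm hjk hil (2 * p : ℤ) (2 * q : ℤ))
        simpa using this
      comm3 := fun i j k s t hij hjk hik => by
        refine PolyF.ext (f := fun s => X i j s * X j k t) (f' := fun s => X i k (s * t) * X j k t * X i j s) ?_ ?_ h2 ?_ s
        · exact (hX i j).mul (PolyF.const _)
        · refine (PolyF.mul ?_ (PolyF.const _)).mul (hX i j)
          simpa only [mul_comm t] using (hX i k).comp_mul t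
        intro p
        refine PolyF.ext (f := fun t => X i j (2 * p) * X j k t) (f' := fun t => X i k (2 * p * t) * X j k t * X i j (2 * p)) ?_ ?_ h2 ?_ t
        · exact (PolyF.const _).mul (hX j k)
        · exact (((hX i k).comp_mul _).mul (hX j k)).mul (PolyF.const _)
        intro q
        show X i j (2 * p) * X j k (2 * q) = X i k (2 * p * (2 * q)) * X j k (2 * q) * X i j (2 * p)
        have e := hXk i k (2 * p * q)
        push_cast at e
        rw [show (2 * p * (2 * q) : ℂ) = 2 * (2 * p * q) by ring, e, hXk, hXk]
        have := congrArg (fun x => (ρ x : Matrix (Fin N) (Fin N) ℂ)) (el_comm3 hij hjk hik (2 * p : ℤ) (2 * q : ℤ))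
        rw [show (2 * p * (2 * q) : ℤ) = 2 * (2 * p * q) by ring] at this
        simpa using this }
  obtain ⟨r, hr⟩ := S.exists_hom (by omega)
  have hrX : ∀ i j, i ≠ j → ∀ t, r (el i j t) = X i j t := by
    intro i j hij t
    have := hr [(⟨(i, j), hij⟩, t)]
    simpa using this
  refine ⟨r, fun i j hij => ?_, fun i j hij k => ?_⟩
  · simp only [hrX i j hij]; exact hX i j
  · rw [hrX i j hij, hXk]
end
end SLX

namespace SLX

lemma el_zpow {n : ℕ} (i j : Fin n) (t : ℤ) (H : Subgroup (Matrix.SpecialLinearGroup (Fin n) ℤ))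
    (h : el i j t ∈ H) (k : ℤ) : el i j (t * k) ∈ H := by
  obtain ⟨m, rfl | rfl⟩ := k.eq_nat_or_neg
  · rw [← el_pow_nat]; exact H.pow_mem h _
  · rw [_root_.mul_neg, ← el_inv, ← el_pow_nat]
    exact H.inv_mem (H.pow_mem h _)

lemma conj_aux {n : ℕ} (H : Subgroup (Matrix.SpecialLinearGroup (Fin n) ℤ))
    (hH : ∀ i j, i ≠ j → ∀ t, el i j (2 * t : ℤ) ∈ H) {i j k l : Fin n} (hij : i ≠ j) (hkl : k ≠ l)
    (h : ¬ (k = j ∧ l = i)) (t : ℤ) : el k l 1 * el i j (2 * t) * (el k l 1)⁻¹ ∈ H := by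
  by_cases hli : l = i
  · subst hli
    have hkj : k ≠ j := fun e => h ⟨e, rfl⟩
    rw [el_comm3 hkl hij hkj, mul_inv_cancel_right, one_mul]
    exact H.mul_mem (hH _ _ hkj _) (hH _ _ hij _)
  · by_cases hkj : k = j
    · subst hkj
      have e : el i k (2 * t) * (el k l 1)⁻¹ = el i l (2 * t * (-1)) * (el k l 1)⁻¹ * el i k (2 * t) := by
        rw [el_inv]
        exact el_comm3 hij hkl (Ne.symm hli) _ _
      rw [mul_assoc, e, ← mul_assoc, ← mul_assoc, el_comm hli hkl, mul_inv_cancel_right]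
      refine H.mul_mem ?_ (hH _ _ hij _)
      rw [mul_assoc]; exact hH _ _ (Ne.symm hli) _
    · rw [el_comm hli hkj, mul_inv_cancel_right]
      exact hH _ _ hij _

lemma conj_aux4 {n : ℕ} (hn : 3 ≤ n) (H : Subgroup (Matrix.SpecialLinearGroup (Fin n) ℤ))
    (hH : ∀ i j, i ≠ j → ∀ t, el i j (2 * t : ℤ) ∈ H) {i j k l : Fin n} (hij : i ≠ j) (hkl : k ≠ l)
    (t : ℤ) : el k l 1 * el i j (4 * t) * (el k l 1)⁻¹ ∈ H := by
  by_cases h : k = j ∧ l = i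
  · obtain ⟨rfl, rfl⟩ := h
    obtain ⟨p, hp1, hp2⟩ := Sys.exists_third hn l k
    have e : el l k (4 * t) = el l p 2 * el p k (2 * t) * (el l p 2)⁻¹ * (el p k (2 * t))⁻¹ := by
      rw [el_comm3 (by tauto) (by tauto) hij]; group
    have a := conj_aux H hH (i := l) (j := p) (k := k) (l := l) (by tauto) hkl (by tauto) 1
    have b := conj_aux H hH (i := p) (j := k) (k := k) (l := l) (by tauto) hkl (by tauto) t
    rw [mul_one] at a
    have := H.mul_mem (H.mul_mem (H.mul_mem a b) (H.inv_mem a)) (H.inv_mem b)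
    rw [e]
    convert this using 1
    group
  · have := conj_aux H hH hij hkl h (2 * t)
    rwa [← mul_assoc] at this

lemma final {n N : ℕ} (hn : 5 ≤ n) (hdim : N < 2 ^ n - 2)
    (hV : ∀ T : Matrix.SpecialLinearGroup (Fin n) (ZMod 2) →* GL (Fin N) ℂ, T = 1)
    (ρ : Matrix.SpecialLinearGroup (Fin n) ℤ →* GL (Fin N) ℂ) :
    ∃ ρ' : Matrix.SpecialLinearGroup (Fin n) ℂ →* GL (Fin N) ℂ,
      (∀ i j : Fin N, ∃ P : MvPolynomial (Fin n × Fin n) ℂ,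
        ∀ g : Matrix.SpecialLinearGroup (Fin n) ℂ, (ρ' g : Matrix (Fin N) (Fin N) ℂ) i j =
        MvPolynomial.eval (fun q => (g : Matrix (Fin n) (Fin n) ℂ) q.1 q.2) P) ∧
      ρ = ρ'.comp (Matrix.SpecialLinearGroup.map (Int.castRingHom ℂ)) := by
  obtain ⟨r, hr, hr2⟩ := exists_alg hn hdim ρ
  let r' : Matrix.SpecialLinearGroup (Fin n) ℂ →* GL (Fin N) ℂ := r.toHomUnits
  have hr' : ∀ g, (r' g : Matrix (Fin N) (Fin N) ℂ) = r g := fun g => rfl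
  refine ⟨r', fun i j => algebraic_of_poly (by omega) r (fun i j hij => hr i j hij) i j, ?_⟩
  let ι : Matrix.SpecialLinearGroup (Fin n) ℤ →* Matrix.SpecialLinearGroup (Fin n) ℂ :=
    Matrix.SpecialLinearGroup.map (Int.castRingHom ℂ)
  have hι : ∀ i j (t : ℤ), ι (el i j t) = el i j (t : ℂ) := fun i j t => el_map _ i j t
  let H : Subgroup (Matrix.SpecialLinearGroup (Fin n) ℤ) := MonoidHom.eqLocus ρ (r'.comp ι)
  have hH2 : ∀ i j, i ≠ j → ∀ t, el i j (2 * t : ℤ) ∈ H := by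
    intro i j hij t
    apply el_zpow
    show ρ (el i j 2) = r' (ι (el i j 2))
    rw [hι]
    have := hr2 i j hij 1
    apply Units.ext
    rw [hr']
    simpa using this.symm
  have hC : ∀ k l, k ≠ l → ∀ g, ρ (el k l 1) * r' g * (ρ (el k l 1))⁻¹ = r' (ι (el k l 1) * g * (ι (el k l 1))⁻¹) := by
    intro k l hkl
    let f1 : Matrix.SpecialLinearGroup (Fin n) ℂ →* GL (Fin N) ℂ := (MulAut.conj (ρ (el k l 1))).toMonoidHom.comp r'
    let f2 : Matrix.SpecialLinearGroup (Fin n) ℂ →* GL (Fin N) ℂ := r'.comp (MulAut.conj (ι (el k l 1))).toMonoidHom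
    have htop : MonoidHom.eqLocus f1 f2 = ⊤ := by
      apply field_gen_top
      intro i j t hij
      show ρ (el k l 1) * r' (el i j t) * (ρ (el k l 1))⁻¹ = r' (ι (el k l 1) * el i j t * (ι (el k l 1))⁻¹)
      apply Units.ext
      rw [map_mul, map_mul]
      refine PolyF.ext (f := fun t => (ρ (el k l 1) : Matrix (Fin N) (Fin N) ℂ) * r (el i j t) * (((ρ (el k l 1))⁻¹ : GL (Fin N) ℂ) : Matrix (Fin N) (Fin N) ℂ))
        (f' := fun t => r (ι (el k l 1)) * r (el i j t) * r (ι (el k l 1))⁻¹) ?_ ?_ (c := 4) (by norm_num) ?_ t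
      · exact ((PolyF.const _).mul (hr i j hij)).mul (PolyF.const _)
      · exact ((PolyF.const _).mul (hr i j hij)).mul (PolyF.const _)
      · intro m
        have a : ρ (el k l 1 * el i j (4 * (m : ℤ)) * (el k l 1)⁻¹) = r' (ι (el k l 1 * el i j (4 * (m : ℤ)) * (el k l 1)⁻¹)) :=
          conj_aux4 (by omega) H hH2 hij hkl m
        have b : ρ (el i j (4 * (m : ℤ))) = r' (ι (el i j (4 * (m : ℤ)))) := by
          have := hH2 i j hij (2 * m)
          rw [← mul_assoc] at this
          exact this
        rw [map_mul, map_mul, map_inv, b, map_mul, map_mul, map_inv, map_mul, map_mul, hι i j] at a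
        have e : el i j (((4 * (m : ℤ) : ℤ)) : ℂ) = el i j (4 * (m : ℂ)) := by push_cast; rfl
        rw [e] at a
        exact congrArg Units.val a
    intro g
    have : g ∈ MonoidHom.eqLocus f1 f2 := by rw [htop]; trivial
    exact this
  have hD : ∀ γ g, ρ γ * r' g * (ρ γ)⁻¹ = r' (ι γ * g * (ι γ)⁻¹) := by
    let D : Subgroup (Matrix.SpecialLinearGroup (Fin n) ℤ) :=
      { carrier := {γ | ∀ g, ρ γ * r' g * (ρ γ)⁻¹ = r' (ι γ * g * (ι γ)⁻¹)}
        one_mem' := by intro g; simp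
        mul_mem' := by
          intro a b ha hb g
          have := ha (ι b * g * (ι b)⁻¹)
          rw [← hb g] at this
          simp only [map_mul, _root_.mul_inv_rev, mul_assoc] at this ⊢
          exact this
        inv_mem' := by
          intro a ha g
          have := ha ((ι a)⁻¹ * g * ι a)
          rw [show ι a * ((ι a)⁻¹ * g * ι a) * (ι a)⁻¹ = g by group] at this
          rw [← this]
          simp only [map_mul, map_inv, inv_inv, mul_assoc]
          group }
    have hDt : D = ⊤ := int_gen D hC
    intro γ
    have : γ ∈ D := by rw [hDt]; trivial
    exact this
  have hcomm : ∀ δ g, ρ δ * (r' (ι δ))⁻¹ * r' g = r' g * (ρ δ * (r' (ι δ))⁻¹) := by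
    intro δ g
    have := hD δ ((ι δ)⁻¹ * g * ι δ)
    rw [show ι δ * ((ι δ)⁻¹ * g * ι δ) * (ι δ)⁻¹ = g by group] at this
    conv_rhs => rw [← this]
    simp only [map_mul, map_inv]
    group
  let σ : Matrix.SpecialLinearGroup (Fin n) ℤ →* GL (Fin N) ℂ :=
    { toFun := fun γ => ρ γ * (r' (ι γ))⁻¹
      map_one' := by simp
      map_mul' := by
        intro γ δ
        have := hcomm δ (ι γ)⁻¹
        rw [map_inv] at this
        simp only [map_mul, _root_.mul_inv_rev]
        calc ρ γ * ρ δ * ((r' (ι δ))⁻¹ * (r' (ι γ))⁻¹) = ρ γ * (ρ δ * (r' (ι δ))⁻¹ * (r' (ι γ))⁻¹) := by group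
          _ = _ := by rw [this]; group }
  have hσ2 : ∀ i j, i ≠ j → ∀ t, σ (el i j (2 * t)) = 1 := by
    intro i j hij t
    have : ρ (el i j (2 * t)) = r' (ι (el i j (2 * t))) := hH2 i j hij t
    show ρ _ * (r' (ι _))⁻¹ = 1
    rw [this, mul_inv_cancel]
  have hker : ∀ g, Matrix.SpecialLinearGroup.map (Int.castRingHom (ZMod 2)) g = 1 → σ g = 1 := by
    intro g hg
    refine gamma2_mem σ.ker (fun k l t hkl => hσ2 k l hkl t) (fun k l hkl => ?_) g hg
    have sq : ∀ k l, k ≠ l → σ (el k l 1) * σ (el k l 1) = 1 := by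
      intro k l h
      rw [← map_mul, ← el_add]
      exact hσ2 k l h 1
    have hx := sq k l hkl
    have hy := sq l k hkl.symm
    show σ (wel k l * wel k l) = 1
    have hy' : σ (el l k (-1)) = σ (el l k 1) := by
      rw [← el_inv, map_inv]; exact inv_eq_of_mul_eq_one_left hy
    simp only [wel, map_mul, hy']
    generalize σ (el k l 1) = x at *
    generalize σ (el l k 1) = y at *
    calc x * y * x * (x * y * x) = x * (y * (x * x) * y) * x := by group
      _ = 1 := by rw [hx, mul_one, hy, mul_one, hx]
  let π : Matrix.SpecialLinearGroup (Fin n) ℤ →* Matrix.SpecialLinearGroup (Fin n) (ZMod 2) :=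
    Matrix.SpecialLinearGroup.map (Int.castRingHom (ZMod 2))
  have hπ : Function.Surjective π := map2_surj
  let T := MonoidHom.liftOfSurjective π hπ ⟨σ, fun g hg => hker g hg⟩
  have hT : ∀ g, T (π g) = σ g := fun g => MonoidHom.liftOfRightInverse_comp_apply π _ _ ⟨σ, fun g hg => hker g hg⟩ g
  ext1 γ
  have h1 := hT γ
  rw [hV T] at h1
  have h2 : ρ γ * (r' (ι γ))⁻¹ = 1 := h1.symm
  exact mul_inv_eq_one.1 h2

end SLX

namespace SLX

abbrev VV (n : ℕ) := Fin n → ZMod 2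
abbrev G2 (n : ℕ) := Matrix.SpecialLinearGroup (Fin n) (ZMod 2)

section act
variable {n : ℕ}

lemma v2 (x : VV n) : x + x = 0 := by
  funext i; exact CharTwo.add_self_eq_zero _

def ac (g : G2 n) (u : VV n) : VV n := (g : Matrix (Fin n) (Fin n) (ZMod 2)) *ᵥ u

lemma ac_one (u : VV n) : ac 1 u = u := by simp [ac]
lemma ac_mul (g h : G2 n) (u : VV n) : ac (g * h) u = ac g (ac h u) := by
  simp [ac, Matrix.mulVec_mulVec]
lemma ac_add (g : G2 n) (u v : VV n) : ac g (u + v) = ac g u + ac g v := by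
  simp [ac, Matrix.mulVec_add]
lemma ac_zero (g : G2 n) : ac g (0 : VV n) = 0 := by simp [ac]
lemma ac_inv (g : G2 n) (u : VV n) : ac g⁻¹ (ac g u) = u := by
  rw [← ac_mul, inv_mul_cancel, ac_one]
lemma ac_inv' (g : G2 n) (u : VV n) : ac g (ac g⁻¹ u) = u := by
  rw [← ac_mul, mul_inv_cancel, ac_one]
lemma ac_inj (g : G2 n) {u v : VV n} : ac g u = ac g v ↔ u = v :=
  ⟨fun h => by rw [← ac_inv g u, h, ac_inv], fun h => by rw [h]⟩
lemma ac_eq0 (g : G2 n) {u : VV n} : ac g u = 0 ↔ u = 0 :=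
  ⟨fun h => by rw [← ac_inv g u, h, ac_zero], fun h => by rw [h, ac_zero]⟩

def ee (n k : ℕ) : VV n := fun j => if (j : ℕ) = k then 1 else 0

lemma ac_ee (g : G2 n) (k : Fin n) (i : Fin n) : ac g (ee n k) i = g i k := by
  simp only [ac, Matrix.mulVec, dotProduct, ee, Fin.val_inj]
  simp

lemma trans_gen {m : ℕ} (v v' : Fin m → VV n) (h : LinearIndependent (ZMod 2) v)
    (h' : LinearIndependent (ZMod 2) v') : ∃ g : G2 n, ∀ i, ac g (v i) = v' i := by
  let f := h.linearCombinationEquiv.symm ≪≫ₗ h'.linearCombinationEquiv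
  obtain ⟨g, hg⟩ := Submodule.exists_linearEquiv_restrict_eq f
  have key : ∀ i, g (v i) = v' i := by
    intro i
    have q1 : (h.linearCombinationEquiv (Finsupp.single i 1) : VV n) = v i := by simp
    have q2 : (h'.linearCombinationEquiv (Finsupp.single i 1) : VV n) = v' i := by simp
    rw [← q1, ← hg, ← q2]; simp [f]
  have hdet : (LinearMap.toMatrix' (g : VV n →ₗ[ZMod 2] VV n)).det = 1 := by
    have hu : IsUnit (LinearMap.toMatrix' (g : VV n →ₗ[ZMod 2] VV n)).det := by
      rw [LinearMap.det_toMatrix']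
      exact LinearEquiv.isUnit_det' g
    have : ∀ a : ZMod 2, IsUnit a → a = 1 := by decide
    exact this _ hu
  refine ⟨⟨_, hdet⟩, fun i => ?_⟩
  show LinearMap.toMatrix' (g : VV n →ₗ[ZMod 2] VV n) *ᵥ (v i) = v' i
  rw [← key i, ← Matrix.toLin'_apply, Matrix.toLin'_toMatrix']; rfl

lemma zm2 : ∀ a : ZMod 2, a = 0 ∨ a = 1 := by decide

lemma li2 {a b : VV n} (ha : a ≠ 0) (hb : b ≠ 0) (hab : a ≠ b) :
    LinearIndependent (ZMod 2) ![a, b] := by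
  rw [LinearIndependent.pair_iff]
  intro s t h
  rcases zm2 s with rfl | rfl <;> rcases zm2 t with rfl | rfl <;> simp at h ⊢
  · exact hb h
  · exact ha h
  · grind [v2 a, v2 b]

lemma li3 {a b c : VV n} (ha : a ≠ 0) (hb : b ≠ 0) (hab : a ≠ b) (hc : c ≠ 0) (hca : c ≠ a)
    (hcb : c ≠ b) (hcab : c ≠ a + b) :
    LinearIndependent (ZMod 2) ![a, b, c] := by
  rw [Fintype.linearIndependent_iff]
  intro g h
  rw [Fin.sum_univ_three] at h
  have : g 0 = 0 ∧ g 1 = 0 ∧ g 2 = 0 := by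
    have h2 : g 0 • a + g 1 • b + g 2 • c = 0 := h
    clear h
    generalize g 0 = p at *
    generalize g 1 = q at *
    generalize g 2 = r at *
    rcases zm2 p with rfl | rfl <;> rcases zm2 q with rfl | rfl <;>
      rcases zm2 r with rfl | rfl <;>
      simp only [zero_smul, one_smul, zero_add, add_zero] at h2 <;>
      grind [v2 a, v2 b, v2 c]
  intro i; fin_cases i
  exacts [this.1, this.2.1, this.2.2]

lemma trans2 {a b a' b' : VV n} (ha : a ≠ 0) (hb : b ≠ 0) (hab : a ≠ b)
    (ha' : a' ≠ 0) (hb' : b' ≠ 0) (hab' : a' ≠ b') : ∃ g : G2 n, ac g a = a' ∧ ac g b = b' := by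
  obtain ⟨g, hg⟩ := trans_gen _ _ (li2 ha hb hab) (li2 ha' hb' hab')
  exact ⟨g, hg 0, hg 1⟩

def Ind3 (a b c : VV n) : Prop :=
  a ≠ 0 ∧ b ≠ 0 ∧ a ≠ b ∧ c ≠ 0 ∧ c ≠ a ∧ c ≠ b ∧ c ≠ a + b

lemma trans3 {a b c a' b' c' : VV n} (h : Ind3 a b c) (h' : Ind3 a' b' c') :
    ∃ g : G2 n, ac g a = a' ∧ ac g b = b' ∧ ac g c = c' := by
  obtain ⟨h1, h2, h3, h4, h5, h6, h7⟩ := h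
  obtain ⟨k1, k2, k3, k4, k5, k6, k7⟩ := h'
  obtain ⟨g, hg⟩ := trans_gen _ _ (li3 h1 h2 h3 h4 h5 h6 h7) (li3 k1 k2 k3 k4 k5 k6 k7)
  exact ⟨g, hg 0, hg 1, hg 2⟩

lemma ee_ne0 {k : ℕ} (hk : k < n) : ee n k ≠ 0 := by
  intro h
  have := congrFun h ⟨k, hk⟩
  simp [ee] at this

lemma ee_ne {k l : ℕ} (hk : k < n) (h : k ≠ l) : ee n k ≠ ee n l := by
  intro h'
  have := congrFun h' ⟨k, hk⟩
  simp [ee, h] at this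

lemma ind_ee (hn : 3 ≤ n) : Ind3 (ee n 0) (ee n 1) (ee n 2) := by
  refine ⟨ee_ne0 (by omega), ee_ne0 (by omega), ee_ne (by omega) (by omega), ee_ne0 (by omega),
    ee_ne (by omega) (by omega), ee_ne (by omega) (by omega), fun h => ?_⟩
  have := congrFun h ⟨2, by omega⟩
  simp [ee] at this

lemma row_dot (g : G2 n) (k l : Fin n) :
    ((g⁻¹ : G2 n) : Matrix (Fin n) (Fin n) (ZMod 2)) k ⬝ᵥ (ac g (ee n l)) = if k = l then 1 else 0 := by
  have : ac g⁻¹ (ac g (ee n l)) k = (if k = l then 1 else 0) := by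
    rw [ac_inv]; simp [ee, Fin.val_inj]
  exact this

/-- functional with values 0 on s, 1 on d -/
lemma exists_fun2 (hn : 2 ≤ n) {s d : VV n} (hs : s ≠ 0) (hd : d ≠ 0) (hsd : s ≠ d) :
    ∃ φ : VV n, φ ⬝ᵥ s = 0 ∧ φ ⬝ᵥ d = 1 := by
  obtain ⟨g, h1, h2⟩ := trans2 (ee_ne0 (by omega : 0 < n)) (ee_ne0 (by omega : 1 < n))
    (ee_ne (by omega) (by omega)) hs hd hsd
  have a := row_dot g ⟨1, by omega⟩ ⟨0, by omega⟩
  have b := row_dot g ⟨1, by omega⟩ ⟨1, by omega⟩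
  simp only [h1, h2] at a b
  exact ⟨_, by simpa using a, by simpa using b⟩

lemma tv_det {s φ : VV n} (h : φ ⬝ᵥ s = 0) : (1 + vecMulVec s φ).det = 1 := by
  have : ∀ a : ZMod 2, a * a = 1 → a = 1 := by decide
  apply this
  rw [← Matrix.det_mul]
  convert Matrix.det_one (n := Fin n) (R := ZMod 2)
  rw [mul_add, add_mul, add_mul, Matrix.vecMulVec_mul_vecMulVec, h]
  ext i j
  simp [add_assoc, CharTwo.add_self_eq_zero]

/-- transvection -/
def tv (s φ : VV n) : G2 n :=
  if h : φ ⬝ᵥ s = 0 then ⟨1 + vecMulVec s φ, tv_det h⟩ else 1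

lemma ac_tv {s φ : VV n} (h : φ ⬝ᵥ s = 0) (u : VV n) : ac (tv s φ) u = u + (φ ⬝ᵥ u) • s := by
  have e : tv s φ = ⟨1 + vecMulVec s φ, tv_det h⟩ := dif_pos h
  rw [e]
  show (1 + vecMulVec s φ) *ᵥ u = _
  rw [Matrix.add_mulVec, Matrix.one_mulVec, Matrix.vecMulVec_mulVec]
  congr 1
  ext i; simp [mul_comm]

lemma ext_ac {g h : G2 n} (H : ∀ u, ac g u = ac h u) : g = h := by
  ext i j
  rw [← ac_ee, ← ac_ee, H]

lemma tv_mul {s φ ψ : VV n} (h : φ ⬝ᵥ s = 0) (h' : ψ ⬝ᵥ s = 0) :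
    tv s φ * tv s ψ = tv s (φ + ψ) := by
  apply ext_ac; intro u
  rw [ac_mul, ac_tv h', ac_tv h, ac_tv (by rw [add_dotProduct, h, h', add_zero])]
  rw [dotProduct_add, dotProduct_smul, h, add_dotProduct, smul_zero, add_zero, add_smul]
  abel

lemma tv_zero (s : VV n) : tv s 0 = 1 := by
  apply ext_ac; intro u
  rw [ac_tv (by simp), ac_one]; simp

/-- pull back functional -/
def pb (g : G2 n) (φ : VV n) : VV n := φ ᵥ* (g : Matrix (Fin n) (Fin n) (ZMod 2))

lemma pb_dot (g : G2 n) (φ u : VV n) : pb g φ ⬝ᵥ u = φ ⬝ᵥ ac g u := by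
  simp [pb, ac, Matrix.dotProduct_mulVec]

lemma tv_conj (g : G2 n) {s φ : VV n} (h : φ ⬝ᵥ ac g s = 0) :
    tv (ac g s) φ * g = g * tv s (pb g φ) := by
  apply ext_ac; intro u
  rw [ac_mul, ac_mul, ac_tv h, ac_tv (by rw [pb_dot, h]), ac_add, pb_dot]
  congr 1
  simp [ac, Matrix.mulVec_smul]

lemma el_tv {i j : Fin n} (h : i ≠ j) (t : ZMod 2) :
    el i j t = tv (ee n i) (t • ee n j) := by
  have h0 : (t • ee n j) ⬝ᵥ ee n i = 0 := by
    simp [dotProduct, ee, Fin.val_inj, h]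
  apply ext_ac; intro u
  rw [ac_tv h0]
  simp only [ac]
  rw [el_coe h, Matrix.add_mulVec, Matrix.one_mulVec]
  congr 1
  ext k
  simp [Matrix.single_mulVec, dotProduct, ee, Fin.val_inj, Function.update_apply, Pi.single_apply]

end act
end SLX

namespace SLX

def chi (a : ZMod 2) : ℂ := if a = 0 then 1 else -1

lemma chi0 : chi 0 = 1 := by simp [chi]
lemma chi1 : chi 1 = -1 := by simp [chi]
lemma chi_add (a b : ZMod 2) : chi (a + b) = chi a * chi b := by
  rcases zm2 a with rfl | rfl <;> rcases zm2 b with rfl | rfl <;> simp [chi]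
  have : (1 + 1 : ZMod 2) = 0 := by decide
  simp [this]
lemma chi_sq (a : ZMod 2) : chi a * chi a = 1 := by
  rcases zm2 a with rfl | rfl <;> simp [chi]

section wt
variable {n : ℕ} {W : Type*} [AddCommGroup W] [Module ℂ W] (τ : G2 n →* Module.End ℂ W)

def Wt (s x : VV n) : Submodule ℂ W where
  carrier := {w | ∀ φ : VV n, φ ⬝ᵥ s = 0 → τ (tv s φ) w = chi (φ ⬝ᵥ x) • w}
  add_mem' := by
    intro a b ha hb φ h
    rw [map_add, ha φ h, hb φ h, smul_add]
  zero_mem' := by intro φ h; simp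
  smul_mem' := by
    intro c a ha φ h
    rw [map_smul, ha φ h, smul_comm]

variable {τ}

lemma mem_Wt {s x : VV n} {w : W} :
    w ∈ Wt τ s x ↔ ∀ φ : VV n, φ ⬝ᵥ s = 0 → τ (tv s φ) w = chi (φ ⬝ᵥ x) • w := Iff.rfl

lemma wt_add {s x : VV n} : Wt τ s (x + s) = Wt τ s x := by
  ext w
  simp only [mem_Wt]
  refine forall₂_congr fun φ h => ?_
  rw [dotProduct_add, h, add_zero]

lemma tau_mul (g h : G2 n) (w : W) : τ (g * h) w = τ g (τ h w) := by
  rw [map_mul]; rfl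
lemma tau_one (w : W) : τ (1 : G2 n) w = w := by
  rw [map_one]; rfl
lemma tau_inj (g : G2 n) {w : W} (h : τ g w = 0) : w = 0 := by
  have := congrArg (τ g⁻¹) h
  rwa [← tau_mul, inv_mul_cancel, tau_one, map_zero] at this

lemma wt_act (g : G2 n) {s x : VV n} {w : W} (h : w ∈ Wt τ s x) :
    τ g w ∈ Wt τ (ac g s) (ac g x) := by
  intro φ hφ
  rw [← tau_mul, tv_conj g hφ, tau_mul, h _ (by rw [pb_dot, hφ]), map_smul, pb_dot]

lemma neg0 {w : W} (h : w = -w) : w = 0 := by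
  have h2 : (2 : ℂ) • w = 0 := by
    rw [two_smul]
    nth_rewrite 1 [h]
    simp
  exact (smul_eq_zero.1 h2).resolve_left two_ne_zero

lemma wt_disj (hn : 2 ≤ n) {s u x : VV n} (hs : s ≠ 0) (h0 : u ≠ x) (h1 : u ≠ x + s) {w : W}
    (hu : w ∈ Wt τ s u) (hx : w ∈ Wt τ s x) : w = 0 := by
  obtain ⟨φ, a, b⟩ := exists_fun2 hn hs (d := u + x) (by grind [v2 u, v2 x, v2 s])
    (by grind [v2 u, v2 x, v2 s])
  have e := (hu φ a).symm.trans (hx φ a)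
  rw [dotProduct_add] at b
  rcases zm2 (φ ⬝ᵥ u) with p | p <;> rcases zm2 (φ ⬝ᵥ x) with q | q <;> rw [p, q] at e b
  · simp at b
  · rw [chi0, chi1, one_smul, neg_one_smul] at e
    exact neg0 e
  · rw [chi0, chi1, one_smul, neg_one_smul] at e
    exact neg0 e.symm
  · exact absurd b (by decide)

variable (τ)
noncomputable def EE (s x : VV n) : Module.End ℂ W :=
  ∑ φ ∈ Finset.univ.filter (fun φ : VV n => φ ⬝ᵥ s = 0), chi (φ ⬝ᵥ x) • τ (tv s φ)
noncomputable def cd (s : VV n) : ℂ := ((Finset.univ.filter (fun φ : VV n => φ ⬝ᵥ s = 0)).card : ℂ)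
variable {τ}

lemma cd_ne (s : VV n) : cd s ≠ 0 := by
  unfold cd
  rw [Nat.cast_ne_zero]
  exact Finset.card_ne_zero_of_mem (a := 0) (by simp)

lemma EE_apply (s x : VV n) (w : W) : EE τ s x w =
    ∑ φ ∈ Finset.univ.filter (fun φ : VV n => φ ⬝ᵥ s = 0), chi (φ ⬝ᵥ x) • τ (tv s φ) w := by
  simp [EE, LinearMap.sum_apply]

lemma EE_mem (s x : VV n) (w : W) : EE τ s x w ∈ Wt τ s x := by
  intro ψ hψ
  rw [EE_apply, map_sum, Finset.smul_sum]
  refine Finset.sum_equiv (Equiv.addRight ψ) ?_ ?_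
  · intro φ
    simp [add_dotProduct, hψ]
  · intro φ hφ
    have hφ' : φ ⬝ᵥ s = 0 := by simpa using hφ
    rw [map_smul, ← tau_mul, tv_mul hψ hφ', Equiv.coe_addRight, add_dotProduct, chi_add, smul_smul,
      add_comm ψ φ, mul_comm (chi (φ ⬝ᵥ x)), ← mul_assoc, chi_sq, one_mul]

lemma EE_smul (s x u : VV n) {w : W} (h : w ∈ Wt τ s u) : ∃ c : ℂ, EE τ s x w = c • w := by
  refine ⟨∑ φ ∈ Finset.univ.filter (fun φ : VV n => φ ⬝ᵥ s = 0), chi (φ ⬝ᵥ x) * chi (φ ⬝ᵥ u), ?_⟩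
  rw [EE_apply, Finset.sum_smul]
  refine Finset.sum_congr rfl fun φ hφ => ?_
  rw [h φ (by simpa using hφ), smul_smul]

lemma EE_self (s x : VV n) {w : W} (h : w ∈ Wt τ s x) : EE τ s x w = cd s • w := by
  rw [EE_apply, cd, Nat.cast_smul_eq_nsmul, ← Finset.sum_const]
  refine Finset.sum_congr rfl fun φ hφ => ?_
  rw [h φ (by simpa using hφ), smul_smul, chi_sq, one_smul]

lemma EE_other (hn : 2 ≤ n) {s x u : VV n} (hs : s ≠ 0) (h0 : u ≠ x) (h1 : u ≠ x + s) {w : W}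
    (h : w ∈ Wt τ s u) : EE τ s x w = 0 := by
  obtain ⟨c, hc⟩ := EE_smul s x u h
  refine wt_disj hn hs h0 h1 ?_ (EE_mem s x w)
  rw [hc]; exact Submodule.smul_mem _ _ h

lemma chi_sum {φ : VV n} (h : φ ≠ 0) : ∑ x : VV n, chi (φ ⬝ᵥ x) = 0 := by
  obtain ⟨i, hi⟩ := Function.ne_iff.1 h
  have hi1 : φ i = 1 := by rcases zm2 (φ i) with h | h; exact absurd h hi; exact h
  have : ∑ x : VV n, chi (φ ⬝ᵥ x) = ∑ x : VV n, -chi (φ ⬝ᵥ x) := by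
    refine Fintype.sum_equiv (Equiv.addRight (Pi.single i 1)) _ _ fun x => ?_
    rw [Equiv.coe_addRight, dotProduct_add, dotProduct_single, hi1, chi_add, mul_one, chi1]
    ring
  rw [Finset.sum_neg_distrib] at this
  exact self_eq_neg.1 this

lemma EE_total (s : VV n) (w : W) : ∑ x : VV n, EE τ s x w = ((2 : ℂ) ^ n) • w := by
  simp_rw [EE_apply]
  rw [Finset.sum_comm]
  simp_rw [← Finset.sum_smul]
  rw [Finset.sum_eq_single 0]
  · simp [chi0, tv_zero]
  · intro φ _ h
    rw [chi_sum h, zero_smul]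
  · intro h; simp at h

lemma KL (hn : 2 ≤ n) {s : VV n} (hs : s ≠ 0) (b : VV n → W) (hb : ∀ u, b u ∈ Wt τ s u)
    (h : ∑ u, b u = 0) (x : VV n) : b x + b (x + s) = 0 := by
  have e := congrArg (EE τ s x) h
  rw [map_sum, map_zero] at e
  have ne : x ≠ x + s := by simpa using hs
  rw [← Finset.sum_subset (Finset.subset_univ {x, x + s}), Finset.sum_pair ne,
    EE_self s x (hb x), EE_self s x (by have := hb (x + s); rwa [wt_add] at this), ← smul_add] at e
  · exact (smul_eq_zero.1 e).resolve_left (cd_ne s)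
  · intro u _ hu
    simp only [Finset.mem_insert, Finset.mem_singleton, not_or] at hu
    exact EE_other hn hs hu.1 hu.2 (hb u)

/-- if all interesting weights vanish, trivial -/
lemma triv (hn : 2 ≤ n) (h : ∀ s x : VV n, s ≠ 0 → x ≠ 0 → x ≠ s → Wt τ s x = ⊥) : ∀ g, τ g = 1 := by
  have key : ∀ (s φ : VV n), s ≠ 0 → φ ⬝ᵥ s = 0 → ∀ w, τ (tv s φ) w = w := by
    intro s φ hs hφ w
    have h1 : ∀ x, τ (tv s φ) (EE τ s x w) = EE τ s x w := by
      intro x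
      have m := EE_mem s x w (τ := τ)
      by_cases hx : x = 0
      · subst hx; rw [m φ hφ]; simp [chi0]
      by_cases hx' : x = s
      · subst hx'; rw [m φ hφ, hφ]; simp [chi0]
      rw [h s x hs hx hx', Submodule.mem_bot] at m
      rw [m, map_zero]
    have h2 := congrArg (τ (tv s φ)) (EE_total s w (τ := τ))
    rw [map_sum, map_smul] at h2
    simp_rw [h1] at h2
    rw [EE_total] at h2
    exact (smul_right_injective W (pow_ne_zero n (two_ne_zero : (2:ℂ) ≠ 0)) h2).symm
  have : τ.ker = ⊤ := by
    apply field_gen_top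
    intro k l t hkl
    rw [MonoidHom.mem_ker, el_tv hkl]
    ext1 w
    refine key _ _ (ee_ne0 k.2) ?_ w
    simp [dotProduct, ee, Fin.val_inj, hkl]
  intro g
  have : g ∈ τ.ker := by rw [this]; trivial
  exact this

lemma dim_bound [FiniteDimensional ℂ W] (L : (VV n → ℂ) →ₗ[ℂ] W) (p q : VV n → ℂ)
    (h : ∀ f, L f = 0 → f ∈ Submodule.span ℂ ({p, q} : Set (VV n → ℂ))) :
    2 ^ n ≤ Module.finrank ℂ W + 2 := by
  classical
  have h1 := LinearMap.finrank_range_add_finrank_ker L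
  have h2 : Module.finrank ℂ (VV n → ℂ) = 2 ^ n := by
    rw [Module.finrank_fintype_fun_eq_card]; simp [ZMod.card]
  have h3 : Module.finrank ℂ (LinearMap.ker L) ≤ 2 := by
    refine (Submodule.finrank_mono (fun f hf => h f hf)).trans ?_
    have := finrank_span_finset_le_card (R := ℂ) ({p, q} : Finset (VV n → ℂ))
    rw [Finset.coe_pair] at this
    exact this.trans Finset.card_le_two
  have h4 := Submodule.finrank_le (LinearMap.range L)
  omega

end wt
end SLX

namespace SLX

section vv
variable {n : ℕ} {W : Type*} [AddCommGroup W] [Module ℂ W] {τ : G2 n →* Module.End ℂ W}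

lemma done1 [FiniteDimensional ℂ W] (hn : 2 ≤ n) (hdim : Module.finrank ℂ W + 2 < 2 ^ n) {v0 w : W}
    (hv : v0 ∈ Wt τ (ee n 0) (ee n 1)) (hv0 : v0 ≠ 0) (hw : w ∈ Wt τ (ee n 0) (ee n 1)) :
    ∃ c : ℂ, w = c • v0 := by
  classical
  by_contra hcon
  push Not at hcon
  have hli : ∀ a b : ℂ, a • v0 + b • w = 0 → a = 0 ∧ b = 0 := by
    intro a b h
    by_cases hb : b = 0
    · subst hb
      rw [zero_smul, add_zero] at h
      exact ⟨(smul_eq_zero.1 h).resolve_right hv0, rfl⟩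
    · exfalso
      refine hcon (-(b⁻¹ * a)) ?_
      have := congrArg (fun t => b⁻¹ • t) h
      simp only [smul_add, smul_smul, inv_mul_cancel₀ hb, one_smul, smul_zero] at this
      rw [neg_smul]
      exact eq_neg_of_add_eq_zero_right this
  let e := ee n 0
  let i0 : Fin n := ⟨0, by omega⟩
  have he : e i0 = 1 := by simp [e, ee, i0]
  have he0 : e ≠ 0 := ee_ne0 (by omega)
  have hex : ∀ y : VV n, ∃ g : G2 n, y ≠ 0 → y ≠ e → ac g e = e ∧ ac g (ee n 1) = y := by
    intro y
    by_cases h1 : y = 0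
    · exact ⟨1, fun h => absurd h1 h⟩
    by_cases h2 : y = e
    · exact ⟨1, fun _ h => absurd h2 h⟩
    obtain ⟨g, a, b⟩ := trans2 (ee_ne0 (by omega : 0 < n)) (ee_ne0 (by omega : 1 < n))
      (ee_ne (by omega) (by omega)) he0 h1 (Ne.symm h2)
    exact ⟨g, fun _ _ => ⟨a, b⟩⟩
  choose g hg using hex
  let p : VV n → VV n := fun x => if x i0 = 0 then x else x + e
  have hp0 : ∀ x, p x i0 = 0 := by
    intro x
    simp only [p]; split_ifs with h
    · exact h
    · rw [Pi.add_apply, he]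
      rcases zm2 (x i0) with h' | h'
      · exact absurd h' h
      · rw [h']; decide
  have hpe : ∀ x, p x ≠ e := by
    intro x h
    have := hp0 x
    rw [h, he] at this
    exact absurd this (by decide)
  have hpw : ∀ x, Wt τ e (p x) = Wt τ e x := by
    intro x; simp only [p]; split_ifs
    · rfl
    · exact wt_add
  let a : VV n → W := fun x => if p x = 0 then 0 else τ (g (p x)) (if x i0 = 0 then v0 else w)
  have ha : ∀ x, a x ∈ Wt τ e x := by
    intro x
    simp only [a]; split_ifs with h1 h2
    · exact Submodule.zero_mem _
    · have := wt_act (g (p x)) hv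
      rw [(hg _ h1 (hpe x)).1, (hg _ h1 (hpe x)).2, hpw] at this
      exact this
    · have := wt_act (g (p x)) hw
      rw [(hg _ h1 (hpe x)).1, (hg _ h1 (hpe x)).2, hpw] at this
      exact this
  have key := dim_bound (Fintype.linearCombination ℂ a) (Pi.single 0 1) (Pi.single e 1) ?_
  · omega
  intro f hf
  rw [Fintype.linearCombination_apply] at hf
  have hk := KL hn he0 (fun u => f u • a u) (fun u => Submodule.smul_mem _ _ (ha u)) hf
  have h1 : ∀ y, y i0 = 0 → y ≠ 0 → f y = 0 ∧ f (y + e) = 0 := by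
    intro y hy hy0
    have h := hk y
    have py : p y = y := by simp [p, hy]
    have hye : (y + e) i0 = 1 := by rw [Pi.add_apply, hy, he, zero_add]
    have pye : p (y + e) = y := by
      simp only [p, hye]
      rw [if_neg (by decide), add_assoc, v2, add_zero]
    have e1 : a y = τ (g y) v0 := by simp only [a, py, hy0, hy, if_true, if_false]
    have e2 : a (y + e) = τ (g y) w := by
      simp only [a, pye, hy0, hye, if_false]
      rw [if_neg (by decide)]
    simp only [e1, e2] at h
    rw [← map_smul, ← map_smul, ← map_add] at h
    exact hli _ _ (tau_inj _ h)
  have h2 : ∀ x, x ≠ 0 → x ≠ e → f x = 0 := by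
    intro x hx hxe
    rcases zm2 (x i0) with h | h
    · exact (h1 x h hx).1
    · have := (h1 (x + e) (by rw [Pi.add_apply, h, he]; decide) (by grind [v2 x, v2 e])).2
      rwa [add_assoc, v2, add_zero] at this
  rw [Submodule.mem_span_pair]
  refine ⟨f 0, f e, ?_⟩
  ext x
  by_cases hx : x = 0
  · subst hx; simp [Pi.single_apply, he0.symm]
  by_cases hx' : x = e
  · subst hx'; simp [Pi.single_apply, he0]
  rw [h2 x hx hx']; simp [Pi.single_apply, hx, hx']

lemma fc2_of (hn : 2 ≤ n) {g : G2 n} (h0 : ac g (ee n 0) = ee n 0) (h1 : ac g (ee n 1) = ee n 1) :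
    FC 2 g := by
  intro k l hl
  rw [← ac_ee]
  have : (l : ℕ) = 0 ∨ (l : ℕ) = 1 := by omega
  rcases this with h | h <;> rw [h]
  · rw [h0]; simp [ee, ← h, Fin.val_inj]
  · rw [h1]; simp [ee, ← h, Fin.val_inj]

lemma el_fix {k l : Fin n} (h : k ≠ l) (t : ZMod 2) {j : ℕ} (hj : j < l) :
    ac (el k l t) (ee n j) = ee n j := by
  rw [el_tv h, ac_tv (by simp [dotProduct, ee, Fin.val_inj, h])]
  have : (t • ee n l) ⬝ᵥ ee n j = 0 := by
    simp only [dotProduct, ee, Pi.smul_apply]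
    apply Finset.sum_eq_zero
    intro i _
    by_cases h1 : (i : ℕ) = l
    · rw [if_neg (show (i:ℕ) ≠ j by omega), mul_zero]
    · rw [if_neg h1, smul_zero, zero_mul]
  rw [this, zero_smul, add_zero]

lemma stab_fix (hn : 5 ≤ n) {v0 : W} (hv : v0 ∈ Wt τ (ee n 0) (ee n 1)) (hv0 : v0 ≠ 0)
    (h1 : ∀ w ∈ Wt τ (ee n 0) (ee n 1), ∃ c : ℂ, w = c • v0) {g : G2 n}
    (g0 : ac g (ee n 0) = ee n 0) (g1 : ac g (ee n 1) = ee n 1) : τ g v0 = v0 := by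
  let H : Subgroup (G2 n) :=
    { carrier := {g | τ g v0 = v0}
      mul_mem' := by
        intro a b ha hb
        show τ (a * b) v0 = v0
        rw [tau_mul, hb, ha]
      one_mem' := tau_one v0
      inv_mem' := by
        intro a ha
        show τ a⁻¹ v0 = v0
        have : τ a v0 = v0 := ha
        conv_lhs => rw [← this]
        rw [← tau_mul, inv_mul_cancel, tau_one] }
  have sc : ∀ (k l : Fin n) (t : ZMod 2), k ≠ l → 2 ≤ (l : ℕ) → ∃ c : ℂ, τ (el k l t) v0 = c • v0 := by
    intro k l t hkl hl
    have := wt_act (el k l t) hv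
    rw [el_fix hkl t (by omega), el_fix hkl t (by omega)] at this
    exact h1 _ this
  have hH : ∀ (k l : Fin n) (t : ZMod 2), k ≠ l → 2 ≤ (l : ℕ) → el k l t ∈ H := by
    intro k l t hkl hl
    obtain ⟨p, hp2, hpk, hpl⟩ : ∃ p : Fin n, 2 ≤ (p : ℕ) ∧ p ≠ k ∧ p ≠ l := by
      by_cases a : (k : ℕ) ≠ 2 ∧ (l : ℕ) ≠ 2
      · exact ⟨⟨2, by omega⟩, by simp, by rw [Ne, Fin.ext_iff]; simp; omega, by rw [Ne, Fin.ext_iff]; simp; omega⟩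
      by_cases b : (k : ℕ) ≠ 3 ∧ (l : ℕ) ≠ 3
      · exact ⟨⟨3, by omega⟩, by simp, by rw [Ne, Fin.ext_iff]; simp; omega, by rw [Ne, Fin.ext_iff]; simp; omega⟩
      · exact ⟨⟨4, by omega⟩, by simp, by rw [Ne, Fin.ext_iff]; simp; omega, by rw [Ne, Fin.ext_iff]; simp; omega⟩
    have e := el_comm3 (R := ZMod 2) hpk.symm hpl hkl t 1
    obtain ⟨a, ha⟩ := sc k p t hpk.symm hp2
    obtain ⟨b, hb⟩ := sc p l 1 hpl hl
    have e2 := congrArg (fun g => τ g v0) e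
    simp only [tau_mul, ha, hb, map_smul, mul_one] at e2
    rw [smul_comm b a] at e2
    have a0 : a ≠ 0 := by
      rintro rfl; rw [zero_smul] at ha; exact hv0 (tau_inj _ ha)
    have b0 : b ≠ 0 := by
      rintro rfl; rw [zero_smul] at hb; exact hv0 (tau_inj _ hb)
    exact (smul_right_injective W b0 (smul_right_injective W a0 (by simpa using e2))).symm
  exact field_gen 2 H hH n 2 le_rfl (by omega) g (fc2_of (by omega) g0 g1)

structure VS (τ : G2 n →* Module.End ℂ W) (v : VV n → VV n → W) : Prop where
  act : ∀ h x z, τ h (v x z) = v (ac h x) (ac h z)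
  mem : ∀ x z, v x z ∈ Wt τ (x + z) x
  ne : ∀ x z, x ≠ 0 → z ≠ 0 → x ≠ z → v x z ≠ 0
  one : ∀ x z, x ≠ 0 → z ≠ 0 → x ≠ z → ∀ w ∈ Wt τ (x + z) x, ∃ c : ℂ, w = c • v x z
  z1 : ∀ x, v 0 x = 0
  z2 : ∀ x, v x 0 = 0
  z3 : ∀ x, v x x = 0

lemma exists_VS (hn : 5 ≤ n) {v0 : W} (hv : v0 ∈ Wt τ (ee n 0) (ee n 1)) (hv0 : v0 ≠ 0)
    (h1 : ∀ w ∈ Wt τ (ee n 0) (ee n 1), ∃ c : ℂ, w = c • v0) : ∃ v, VS τ v := by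
  classical
  have hex : ∀ x z : VV n, ∃ g : G2 n, x ≠ 0 → z ≠ 0 → x ≠ z →
      ac g (ee n 0) = x + z ∧ ac g (ee n 1) = x := by
    intro x z
    by_cases h : x ≠ 0 ∧ z ≠ 0 ∧ x ≠ z
    · obtain ⟨a, b, c⟩ := h
      obtain ⟨g, h⟩ := trans2 (ee_ne0 (by omega : 0 < n)) (ee_ne0 (by omega : 1 < n))
        (ee_ne (by omega) (by omega)) (a' := x + z) (b' := x) (by grind [v2 x, v2 z]) a
        (by grind [v2 x, v2 z])
      exact ⟨g, fun _ _ _ => h⟩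
    · exact ⟨1, fun a b c => absurd ⟨a, b, c⟩ h⟩
  choose g hg using hex
  let v : VV n → VV n → W := fun x z => if x ≠ 0 ∧ z ≠ 0 ∧ x ≠ z then τ (g x z) v0 else 0
  have vdef : ∀ x z, x ≠ 0 → z ≠ 0 → x ≠ z → v x z = τ (g x z) v0 :=
    fun x z a b c => if_pos ⟨a, b, c⟩
  refine ⟨v, ?_, ?_, ?_, ?_, ?_, ?_, ?_⟩
  · intro h x z
    by_cases hh : x ≠ 0 ∧ z ≠ 0 ∧ x ≠ z
    · obtain ⟨a, b, c⟩ := hh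
      have a' : ac h x ≠ 0 := fun e => a ((ac_eq0 h).1 e)
      have b' : ac h z ≠ 0 := fun e => b ((ac_eq0 h).1 e)
      have c' : ac h x ≠ ac h z := fun e => c ((ac_inj h).1 e)
      rw [vdef _ _ a b c, vdef _ _ a' b' c', ← tau_mul]
      obtain ⟨p, q⟩ := hg _ _ a b c
      obtain ⟨p', q'⟩ := hg _ _ a' b' c'
      have := stab_fix hn hv hv0 h1 (g := (g (ac h x) (ac h z))⁻¹ * (h * g x z))
        (by rw [ac_mul, ac_mul, p, ac_add, ← p', ac_inv]) (by
          rw [ac_mul, ac_mul, q]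
          exact (congrArg (ac (g (ac h x) (ac h z))⁻¹) q'.symm).trans (ac_inv _ _))
      conv_rhs => rw [← this, ← tau_mul, ← mul_assoc, mul_inv_cancel, one_mul]
    · have : ¬ (ac h x ≠ 0 ∧ ac h z ≠ 0 ∧ ac h x ≠ ac h z) := by
        simpa only [Ne, ac_eq0, ac_inj] using hh
      simp only [v, if_neg hh, if_neg this, map_zero]
  · intro x z
    by_cases hh : x ≠ 0 ∧ z ≠ 0 ∧ x ≠ z
    · obtain ⟨a, b, c⟩ := hh
      have := wt_act (g x z) hv
      rw [(hg _ _ a b c).1, (hg _ _ a b c).2] at this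
      rwa [vdef _ _ a b c]
    · simp only [v, if_neg hh]; exact Submodule.zero_mem _
  · intro x z a b c h
    rw [vdef _ _ a b c] at h
    exact hv0 (tau_inj _ h)
  · intro x z a b c w hw
    have := wt_act (g x z)⁻¹ hw
    obtain ⟨p, q⟩ := hg _ _ a b c
    have p' : ac (g x z)⁻¹ (x + z) = ee n 0 := by rw [← p, ac_inv]
    have q' : ac (g x z)⁻¹ x = ee n 1 :=
      (congrArg (ac (g x z)⁻¹) q.symm).trans (ac_inv _ _)
    rw [p', q'] at this
    obtain ⟨k, hk⟩ := h1 _ this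
    refine ⟨k, ?_⟩
    rw [vdef _ _ a b c, ← map_smul, ← hk, ← tau_mul, mul_inv_cancel, tau_one]
  · intro x; simp [v]
  · intro x; simp [v]
  · intro x; simp [v]

end vv
end SLX

namespace SLX

section rel
variable {n : ℕ} {W : Type*} [AddCommGroup W] [Module ℂ W] {τ : G2 n →* Module.End ℂ W}
  {v : VV n → VV n → W}

lemma ac_tv0 {s φ u : VV n} (h : φ ⬝ᵥ s = 0) (hu : φ ⬝ᵥ u = 0) : ac (tv s φ) u = u := by
  rw [ac_tv h, hu, zero_smul, add_zero]
lemma ac_tv1 {s φ u : VV n} (h : φ ⬝ᵥ s = 0) (hu : φ ⬝ᵥ u = 1) : ac (tv s φ) u = u + s := by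
  rw [ac_tv h, hu, one_smul]

lemma dot_z {φ x z : VV n} (h : φ ⬝ᵥ (x + z) = 0) : φ ⬝ᵥ z = φ ⬝ᵥ x := by
  rw [dotProduct_add] at h
  have : ∀ a b : ZMod 2, a + b = 0 → b = a := by decide
  exact this _ _ h

lemma VS.anti (H : VS τ v) (hn : 5 ≤ n) (x z : VV n) : v z x = - v x z := by
  by_cases h1 : x = 0
  · rw [h1, H.z1, H.z2, neg_zero]
  by_cases h2 : z = 0
  · rw [h2, H.z1, H.z2, neg_zero]
  by_cases h3 : x = z
  · rw [h3, H.z3, neg_zero]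
  obtain ⟨φ, a, b⟩ := exists_fun2 (by omega : 2 ≤ n) (s := x + z) (d := x)
    (by grind [v2 x, v2 z]) h1 (by grind [v2 x, v2 z])
  have e := H.mem x z φ a
  rw [H.act, ac_tv1 a b, ac_tv1 a (by rw [dot_z a, b]), b, chi1, neg_one_smul] at e
  have e1 : x + (x + z) = z := by grind [v2 x, v2 z]
  have e2 : z + (x + z) = x := by grind [v2 x, v2 z]
  rwa [e1, e2] at e

lemma VS.line (H : VS τ v) (hn : 5 ≤ n) : ∃ κ : ℂ, ∀ x z : VV n, x ≠ 0 → z ≠ 0 → x ≠ z →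
    v x (x + z) - v z (x + z) = κ • v x z := by
  have key : ∀ x z : VV n, v x (x + z) - v z (x + z) ∈ Wt τ (x + z) x := by
    intro x z φ hφ
    have hz := dot_z hφ
    have e1 : x + (x + z) = z := by grind [v2 x, v2 z]
    have e2 : z + (x + z) = x := by grind [v2 x, v2 z]
    rw [map_sub, H.act, H.act]
    rcases zm2 (φ ⬝ᵥ x) with h | h
    · rw [ac_tv0 hφ hφ, ac_tv0 hφ h, ac_tv0 hφ (hz.trans h), h, chi0, one_smul]
    · rw [ac_tv0 hφ hφ, ac_tv1 hφ h, ac_tv1 hφ (hz.trans h), h, chi1, e1, e2, neg_one_smul, neg_sub]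
  have h0 := ee_ne0 (by omega : 0 < n)
  have h1 := ee_ne0 (by omega : 1 < n)
  have h01 : ee n 0 ≠ ee n 1 := ee_ne (by omega) (by omega)
  obtain ⟨κ, hκ⟩ := H.one _ _ h0 h1 h01 _ (key (ee n 0) (ee n 1))
  refine ⟨κ, fun x z a b c => ?_⟩
  obtain ⟨g, p, q⟩ := trans2 h0 h1 h01 a b c
  have := congrArg (τ g) hκ
  rwa [map_sub, map_smul, H.act, H.act, H.act, ac_add, p, q] at this

lemma kappa (H : VS τ v) (hn : 5 ≤ n) {κ : ℂ} (hκ : ∀ x z : VV n, x ≠ 0 → z ≠ 0 → x ≠ z →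
    v x (x + z) - v z (x + z) = κ • v x z) : κ = 1 ∨ κ = -2 := by
  have h0 := ee_ne0 (by omega : 0 < n)
  have h1 := ee_ne0 (by omega : 1 < n)
  have h01 : ee n 0 ≠ ee n 1 := ee_ne (by omega) (by omega)
  generalize ee n 0 = x at *
  generalize ee n 1 = z at *
  have e1 : x + (x + z) = z := by grind [v2 x, v2 z]
  have e2 : z + (x + z) = x := by grind [v2 x, v2 z]
  have r1 := hκ x z h0 h1 h01
  have r2 := hκ x (x + z) h0 (by grind [v2 x, v2 z]) (by grind [v2 x, v2 z])
  have r3 := hκ z (x + z) h1 (by grind [v2 x, v2 z]) (by grind [v2 x, v2 z])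
  rw [e1] at r2
  rw [e2] at r3
  rw [H.anti hn z (x + z)] at r2
  rw [H.anti hn x (x + z), H.anti hn x z] at r3
  have ne := H.ne x z h0 h1 h01
  have e : (κ * κ + κ - 2) • v x z = 0 := by
    have : κ • κ • v x z = (2 : ℂ) • v x z - κ • v x z := by
      conv_lhs => rw [← r1]
      rw [smul_sub, ← r2, ← r3, ← r1, two_smul]; abel
    rw [sub_smul, add_smul, mul_smul, this]; abel
  have := (smul_eq_zero.1 e).resolve_right ne
  have h : (κ - 1) * (κ + 2) = 0 := by linear_combination this
  rcases mul_eq_zero.1 h with h | h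
  · left; linear_combination h
  · right; linear_combination h

lemma VS.tri (H : VS τ v) (hn : 5 ≤ n) : ∃ α β : ℂ, ∀ x y z : VV n, Ind3 x y z →
    v x y + v y z = α • v x z + β • v (x + y) (y + z) := by
  have key : ∀ x y z : VV n, Ind3 x y z → ∃ α β : ℂ,
      v x y + v y z = α • v x z + β • v (x + y) (y + z) := by
    intro x y z hi
    have ma : (v x y - v z y) + (v x (y + (x + z)) - v z (y + (x + z))) ∈ Wt τ (x + z) x := by
      intro φ hφ
      have hz := dot_z hφ
      have e1 : x + (x + z) = z := by grind [v2 x, v2 z]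
      have e2 : z + (x + z) = x := by grind [v2 x, v2 z]
      have e3 : y + (x + z) + (x + z) = y := by rw [add_assoc, v2, add_zero]
      have hs : φ ⬝ᵥ (y + (x + z)) = φ ⬝ᵥ y := by rw [dotProduct_add φ y, hφ, add_zero]
      rw [map_add, map_sub, map_sub, H.act, H.act, H.act, H.act]
      rcases zm2 (φ ⬝ᵥ x) with h | h <;> rcases zm2 (φ ⬝ᵥ y) with h' | h'
      · rw [ac_tv0 hφ h, ac_tv0 hφ (hz.trans h), ac_tv0 hφ h', ac_tv0 hφ (hs.trans h'), h, chi0, one_smul]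
      · rw [ac_tv0 hφ h, ac_tv0 hφ (hz.trans h), ac_tv1 hφ h', ac_tv1 hφ (hs.trans h'), h, chi0, one_smul, e3]
        abel
      · rw [ac_tv1 hφ h, ac_tv1 hφ (hz.trans h), ac_tv0 hφ h', ac_tv0 hφ (hs.trans h'), h, chi1, neg_one_smul, e1, e2]
        abel
      · rw [ac_tv1 hφ h, ac_tv1 hφ (hz.trans h), ac_tv1 hφ h', ac_tv1 hφ (hs.trans h'), h, chi1, neg_one_smul, e1, e2, e3]
        abel
    have mb : (v x y - v z y) - (v x (y + (x + z)) - v z (y + (x + z))) ∈ Wt τ ((x + y) + (y + z)) (x + y) := by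
      have e0 : (x + y) + (y + z) = x + z := by grind [v2 y]
      rw [e0]
      intro φ hφ
      have hz := dot_z hφ
      have e1 : x + (x + z) = z := by grind [v2 x, v2 z]
      have e2 : z + (x + z) = x := by grind [v2 x, v2 z]
      have e3 : y + (x + z) + (x + z) = y := by rw [add_assoc, v2, add_zero]
      have hs : φ ⬝ᵥ (y + (x + z)) = φ ⬝ᵥ y := by rw [dotProduct_add φ y, hφ, add_zero]
      rw [map_sub, map_sub, map_sub, H.act, H.act, H.act, H.act, dotProduct_add, chi_add]
      rcases zm2 (φ ⬝ᵥ x) with h | h <;> rcases zm2 (φ ⬝ᵥ y) with h' | h'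
      · rw [ac_tv0 hφ h, ac_tv0 hφ (hz.trans h), ac_tv0 hφ h', ac_tv0 hφ (hs.trans h'), h, h', chi0, one_mul, one_smul]
      · rw [ac_tv0 hφ h, ac_tv0 hφ (hz.trans h), ac_tv1 hφ h', ac_tv1 hφ (hs.trans h'), h, h', chi0, chi1, one_mul, neg_one_smul, e3]
        abel
      · rw [ac_tv1 hφ h, ac_tv1 hφ (hz.trans h), ac_tv0 hφ h', ac_tv0 hφ (hs.trans h'), h, h', chi0, chi1, mul_one, neg_one_smul, e1, e2]
        abel
      · rw [ac_tv1 hφ h, ac_tv1 hφ (hz.trans h), ac_tv1 hφ h', ac_tv1 hφ (hs.trans h'), h, h', chi1, neg_one_mul, neg_neg, one_smul, e1, e2, e3]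
        abel
    obtain ⟨i1, i2, i3, i4, i5, i6, i7⟩ := hi
    obtain ⟨a, ha⟩ := H.one x z i1 i4 i5.symm _ ma
    obtain ⟨b, hb⟩ := H.one (x + y) (y + z) (by grind [v2 x, v2 y]) (by grind [v2 z, v2 y]) (by grind [v2 x, v2 y, v2 z]) _ mb
    refine ⟨a / 2, b / 2, ?_⟩
    rw [div_eq_inv_mul, div_eq_inv_mul, mul_smul, mul_smul, ← ha, ← hb, ← smul_add, H.anti hn z y]
    rw [show ∀ p q : W, p + q + (p - q) = (2 : ℂ) • p by intro p q; rw [two_smul]; abel, smul_smul]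
    rw [inv_mul_cancel₀ two_ne_zero, one_smul, sub_eq_add_neg]
  have hi := ind_ee (by omega : 3 ≤ n)
  obtain ⟨α, β, h⟩ := key _ _ _ hi
  refine ⟨α, β, fun x y z hxyz => ?_⟩
  obtain ⟨g, p, q, r⟩ := trans3 hi hxyz
  have := congrArg (τ g) h
  rwa [map_add, map_add, map_smul, map_smul, H.act, H.act, H.act, H.act, ac_add, ac_add, p, q, r] at this

lemma alpha (H : VS τ v) (hn : 5 ≤ n) {κ α β : ℂ} (hκ : ∀ x z : VV n, x ≠ 0 → z ≠ 0 → x ≠ z →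
    v x (x + z) - v z (x + z) = κ • v x z)
    (hα : ∀ x y z : VV n, Ind3 x y z → v x y + v y z = α • v x z + β • v (x + y) (y + z)) :
    α = 1 ∨ α = -2 := by
  have hi := ind_ee (by omega : 3 ≤ n)
  generalize ee n 0 = x at *
  generalize ee n 1 = y at *
  generalize ee n 2 = z at *
  have r1 := hα x y z hi
  have r2 := hα y z x (by unfold Ind3 at *; grind [v2 x, v2 y, v2 z])
  have r3 := hα z x y (by unfold Ind3 at *; grind [v2 x, v2 y, v2 z])
  obtain ⟨i1, i2, i3, i4, i5, i6, i7⟩ := hi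
  have r4 := hκ (x + y) (y + z) (by grind [v2 x, v2 y]) (by grind [v2 z, v2 y]) (by grind [v2 x, v2 y, v2 z])
  have e0 : (x + y) + (y + z) = z + x := by grind [v2 y]
  rw [e0] at r4
  rw [H.anti hn (z + x) (x + y)] at r4
  rw [H.anti hn x y] at r2
  rw [H.anti hn y z] at r3
  rw [H.anti hn z x] at r1
  have m1 : v z x ∈ Wt τ (z + x) x := by
    have := H.mem z x
    have e : z = x + (z + x) := by grind [v2 x, v2 z]
    have e' : Wt τ (z + x) z = Wt τ (z + x) x :=
      (congrArg (Wt τ (z + x)) e).trans wt_add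
    rwa [e'] at this
  have m2 := H.mem (x + y) (y + z)
  rw [e0] at m2
  have rel : ((2 + α) * (1 - α)) • v z x + ((2 + α) * β - β * (1 - κ)) • v (x + y) (y + z) = 0 := by
    generalize v x y = A at *
    generalize v y z = B at *
    generalize v z x = C at *
    generalize v (x + y) (y + z) = P at *
    generalize v (y + z) (z + x) = Q at *
    generalize v (z + x) (x + y) = R at *
    have hA : A = α • -C + β • P - B := by rw [← r1]; abel
    have hQ : Q = - R - κ • P := by rw [← r4]; abel
    subst hQ
    subst hA
    have h23 : ((2 + α) * (1 - α)) • C + ((2 + α) * β - β * (1 - κ)) • P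
        = (B + C - (α • -(α • -C + β • P - B) + β • (-R - κ • P)))
          + (C + (α • -C + β • P - B) - (α • -B + β • R)) := by
      module
    rw [h23, r2, r3]; abel
  have z0 : ((2 + α) * (1 - α)) • v z x = 0 := by
    refine wt_disj (by omega : 2 ≤ n) (s := z + x) (u := x) (x := x + y) (by grind [v2 x, v2 z]) (by grind [v2 x, v2 z])
      (by grind [v2 x, v2 z, v2 y]) (Submodule.smul_mem _ _ m1) ?_
    rw [eq_neg_of_add_eq_zero_left rel]
    exact Submodule.neg_mem _ (Submodule.smul_mem _ _ m2)
  have := (smul_eq_zero.1 z0).resolve_right (H.ne z x i4 i1 i5)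
  rcases mul_eq_zero.1 this with h | h
  · right; linear_combination h
  · left; linear_combination -h

lemma VS.qdiff (H : VS τ v) (hn : 5 ≤ n) : ∃ c : ℂ, c ≠ 0 ∧ ∀ x z : VV n, x ≠ 0 → z ≠ 0 → x ≠ z →
    (∑ y, v x y) - ∑ y, v z y = c • v x z := by
  obtain ⟨κ, hκ⟩ := H.line hn
  obtain ⟨α, β, hα⟩ := H.tri hn
  refine ⟨2 + κ + (2 ^ n - 4) * α, ?_, ?_⟩
  · have h32 : 2 ^ 5 ≤ 2 ^ n := Nat.pow_le_pow_right (by norm_num) hn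
    obtain ⟨k, hk⟩ : ∃ k : ℕ, k = 2 ^ n := ⟨_, rfl⟩
    have hkc : (2 : ℂ) ^ n = (k : ℂ) := by rw [hk]; push_cast; rfl
    rw [← hk] at h32
    rw [hkc]
    intro h
    rcases kappa H hn hκ with rfl | rfl <;> rcases alpha H hn hκ hα with rfl | rfl
    · have : (k : ℂ) = 1 := by linear_combination h
      have : k = 1 := by exact_mod_cast this
      omega
    · have : (2 : ℂ) * k = 11 := by linear_combination -h
      have : 2 * k = 11 := by exact_mod_cast this
      omega
    · have : (k : ℂ) = 4 := by linear_combination h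
      have : k = 4 := by exact_mod_cast this
      omega
    · have : (k : ℂ) = 4 := by linear_combination -(1/2) * h
      have : k = 4 := by exact_mod_cast this
      omega
  · intro x z hx hz hxz
    have e1 : x + (x + z) = z := by grind [v2 x, v2 z]
    have e2 : x + z + z = x := by grind [v2 x, v2 z]
    have s0 : ∑ y, v (x + y) (y + z) = 0 := by
      apply neg0
      rw [← Finset.sum_neg_distrib]
      refine Fintype.sum_equiv (Equiv.addRight (x + z)) _ _ fun y => ?_
      have f1 : x + (y + (x + z)) = y + z := by grind [v2 x, v2 z]
      have f2 : y + (x + z) + z = x + y := by grind [v2 x, v2 z]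
      show v (x + y) (y + z) = -v (x + (y + (x + z))) (y + (x + z) + z)
      rw [f1, f2, H.anti hn]
    have s1 : ∑ y, (v x y - v z y - α • v x z - β • v (x + y) (y + z)) = (2 + κ - 4 * α) • v x z := by
      have n1 : (0 : VV n) ∉ ({x, z, x + z} : Finset (VV n)) := by
        simp only [Finset.mem_insert, Finset.mem_singleton]
        grind [v2 x, v2 z]
      have n2 : x ∉ ({z, x + z} : Finset (VV n)) := by
        simp only [Finset.mem_insert, Finset.mem_singleton]
        grind [v2 x, v2 z]
      have n3 : z ∉ ({x + z} : Finset (VV n)) := by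
        simp only [Finset.mem_insert, Finset.mem_singleton]
        grind [v2 x, v2 z]
      rw [← Finset.sum_subset (Finset.subset_univ {0, x, z, x + z}), Finset.sum_insert n1,
        Finset.sum_insert n2, Finset.sum_insert n3, Finset.sum_singleton]
      · rw [hκ x z hx hz hxz, e1, e2, v2, v2, H.z1, H.z2, H.z2, H.z2, H.z3, H.z3, H.anti hn x z, add_zero, zero_add]
        module
      · intro y _ hy
        simp only [Finset.mem_insert, Finset.mem_singleton, not_or] at hy
        obtain ⟨y0, yx, yz, ys⟩ := hy
        have := hα x y z ⟨hx, y0, Ne.symm yx, hz, Ne.symm hxz, Ne.symm yz, by grind [v2 x, v2 y, v2 z]⟩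
        rw [H.anti hn y z, sub_neg_eq_add, this]
        abel
    rw [Finset.sum_sub_distrib, Finset.sum_sub_distrib, Finset.sum_sub_distrib, ← Finset.smul_sum (r := β), s0,
      Finset.sum_const, smul_zero, sub_zero] at s1
    have hc : (Finset.univ : Finset (VV n)).card = 2 ^ n := by simp [ZMod.card]
    rw [hc, ← Nat.cast_smul_eq_nsmul ℂ, sub_eq_iff_eq_add] at s1
    rw [s1]
    push_cast
    module

lemma no_VS [FiniteDimensional ℂ W] (H : VS τ v) (hn : 5 ≤ n) :
    2 ^ n ≤ Module.finrank ℂ W + 2 := by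
  classical
  obtain ⟨c, hc0, hc⟩ := H.qdiff hn
  let q : VV n → W := fun x => ∑ y, v x y
  have qact : ∀ h x, τ h (q x) = q (ac h x) := by
    intro h x
    simp only [q, map_sum, H.act]
    refine Fintype.sum_bijective (ac h) ⟨fun a b e => (ac_inj h).1 e, fun y => ⟨_, ac_inv' h y⟩⟩ _ _ fun y => rfl
  have q0 : q 0 = 0 := by simp [q, H.z1]
  have he := ee_ne0 (by omega : 0 < n)
  refine dim_bound (Fintype.linearCombination ℂ q) (fun _ => 1) (Pi.single 0 1) ?_
  intro f hf
  rw [Fintype.linearCombination_apply] at hf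
  have key : ∀ x z, x ≠ 0 → z ≠ 0 → x ≠ z → f x = f z := by
    intro x z hx hz hxz
    have hs : x + z ≠ 0 := by grind [v2 x, v2 z]
    generalize hsd : x + z = s at *
    have inv : ∀ u, q u + q (u + s) ∈ Wt τ s 0 := by
      intro u φ hφ
      rw [map_add, qact, qact, dotProduct_zero, chi0, one_smul]
      have hus : φ ⬝ᵥ (u + s) = φ ⬝ᵥ u := by rw [dotProduct_add, hφ, add_zero]
      rcases zm2 (φ ⬝ᵥ u) with h | h
      · rw [ac_tv0 hφ h, ac_tv0 hφ (hus.trans h)]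
      · rw [ac_tv1 hφ h, ac_tv1 hφ (hus.trans h), add_assoc, v2, add_zero, add_comm]
    have qs : q s ∈ Wt τ s 0 := by
      have := inv 0
      rwa [q0, zero_add, zero_add] at this
    have dif : ∀ u, q u - q (u + s) ∈ Wt τ s u := by
      intro u
      by_cases h1 : u = 0
      · rw [h1, zero_add, q0, zero_sub]; exact Submodule.neg_mem _ qs
      by_cases h2 : u = s
      · rw [h2, v2, q0, sub_zero]
        have := wt_add (τ := τ) (s := s) (x := 0)
        rw [zero_add] at this
        rwa [this]
      · show (∑ y, v u y) - ∑ y, v (u + s) y ∈ _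
        rw [hc u (u + s) h1 (by grind [v2 u, v2 s]) (by simpa using hs)]
        have := H.mem u (u + s)
        rw [← add_assoc, v2, zero_add] at this
        exact Submodule.smul_mem _ _ this
    have hsum : ∑ u, (f u • (q u - q (u + s)) + if u = 0 then ∑ t, f t • (q t + q (t + s)) else 0) = 0 := by
      rw [Finset.sum_add_distrib, Finset.sum_ite_eq' Finset.univ, if_pos (Finset.mem_univ _),
        ← Finset.sum_add_distrib]
      have : ∀ u, f u • (q u - q (u + s)) + f u • (q u + q (u + s)) = (2 : ℂ) • (f u • q u) := by
        intro u; module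
      simp_rw [this]
      rw [← Finset.smul_sum, hf, smul_zero]
    have := KL (τ := τ) (by omega : 2 ≤ n) hs _ (fun u => ?_) hsum x
    · have hxs : x + s = z := by grind [v2 x, v2 z]
      have hzs : z + s = x := by grind [v2 x, v2 z]
      rw [hxs, if_neg hx, if_neg hz, hzs, add_zero, add_zero] at this
      have d1 : q x - q z = c • v x z := hc x z hx hz hxz
      have d2 : q z - q x = - (c • v x z) := by rw [← d1]; abel
      rw [d1, d2, smul_neg, smul_smul, smul_smul, ← sub_eq_add_neg, ← sub_smul, ← sub_mul] at this
      have := (smul_eq_zero.1 this).resolve_right (H.ne x z hx hz hxz)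
      exact sub_eq_zero.1 ((mul_eq_zero.1 this).resolve_right hc0)
    · refine Submodule.add_mem _ (Submodule.smul_mem _ _ (dif u)) ?_
      split_ifs with h
      · rw [h]
        exact Submodule.sum_mem _ fun t _ => Submodule.smul_mem _ _ (inv t)
      · exact Submodule.zero_mem _
  rw [Submodule.mem_span_pair]
  refine ⟨f (ee n 0), f 0 - f (ee n 0), ?_⟩
  ext x
  by_cases hx : x = 0
  · subst hx; simp
  by_cases hx' : x = ee n 0
  · subst hx'; simp [Pi.single_apply, hx]
  · rw [key x (ee n 0) hx he hx']; simp [Pi.single_apply, hx]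

end rel

theorem partV {n N : ℕ} (hn : 5 ≤ n) (hdim : N < 2 ^ n - 2)
    (T : Matrix.SpecialLinearGroup (Fin n) (ZMod 2) →* GL (Fin N) ℂ) : T = 1 := by
  have hfr : Module.finrank ℂ (Fin N → ℂ) = N := by simp
  have hall : ∀ g, repEnd T g = 1 := by
    apply triv (by omega : 2 ≤ n)
    by_contra hcon
    push Not at hcon
    obtain ⟨s, x, hs, hx, hxs, hne⟩ := hcon
    obtain ⟨w, hw, hw0⟩ := Submodule.exists_mem_ne_zero_of_ne_bot hne
    obtain ⟨g, p, q⟩ := trans2 hs hx (Ne.symm hxs) (ee_ne0 (by omega : 0 < n)) (ee_ne0 (by omega : 1 < n))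
        (ee_ne (by omega) (by omega))
    have hv := wt_act g hw
    rw [p, q] at hv
    have hv0 : repEnd T g w ≠ 0 := fun h => hw0 (tau_inj _ h)
    obtain ⟨v, H⟩ := exists_VS hn hv hv0 (fun w' hw' => done1 (by omega) (by rw [hfr]; omega) hv hv0 hw')
    have := no_VS H hn
    rw [hfr] at this
    omega
  ext1 g
  have h := hall g
  rw [repEnd_apply] at h
  apply Units.ext
  have h2 := (Matrix.toLinAlgEquiv' (R := ℂ) (n := Fin N)).injective (h.trans (map_one _).symm)
  simpa using h2

end SLX

/-- For `n ≥ 5`, any complex representation of `SL_n(ℤ)` of dimension less than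
`2^n − 2` extends (not just virtually) to an algebraic representation of `SL_n(ℂ)`. -/
theorem lowDim_extends_to_algebraic (n N : ℕ) (hn : 5 ≤ n) (hdim : N < 2 ^ n - 2)
    (ρ : Matrix.SpecialLinearGroup (Fin n) ℤ →* GL (Fin N) ℂ) :
    ∃ ρ' : Matrix.SpecialLinearGroup (Fin n) ℂ →* GL (Fin N) ℂ,
      IsAlgebraicSL ρ' ∧
      ρ = ρ'.comp (Matrix.SpecialLinearGroup.map (Int.castRingHom ℂ)) := by
  obtain ⟨ρ', h1, h2⟩ := SLX.final hn hdim (fun T => SLX.partV hn hdim T) ρ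
  exact ⟨ρ', h1, h2⟩
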